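/- arXiv:1805.06272 — 3 statements merged into one kernel-verified Lean document; each statement's English description precedes it below -/
import Mathlib

section
/- Let n ≥ 1. There exists a sequence of centered probability measures dμ_k = f_k dγ on ℝⁿ with finite second moments such that, as k → ∞: δ(μ_k) → 0, W_1(μ_k, γ) → ∞, δ_Tal(μ_k) → ∞, and W_1²(μ_k, γ) / H(μ_k) → 0. -/
/-!
The measures are three-component Gaussian mixtures
`μ = (1 - t) γ + (t/2) γ(· - a eᵢ) + (t/2) γ(· + a eᵢ)`, with `t → 0`, `t a → ∞`: a small amount
of mass is sent very far away. The choice `t = 1/m`, `a = m²` with `m → ∞` is used.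

Since `γ` translated by `b eᵢ` has density `exp(b xᵢ - b²/2)` (`withDensity_tilt`), integrals
against `μ` reduce to integrals against `γ`, and the following estimates hold.

* Entropy (`relEnt_mix_bounds`): convexity gives `H(μ) ≤ t a²/2`, and monotonicity of `log` gives
  `H(μ) ≥ t a²/2 - S(t)`, where `S(t) → 0` is the Shannon entropy of the weights.
* Fisher information (`fisherInfo_mix_bounds`): `I(μ) ≤ t a²` by convexity, and `I(μ) ≥ t a²` up
  to an error exponentially small in `a²`, because the components barely overlap. Together with
  the entropy bounds this yields `δ(μ) → 0` in both directions, without invoking the logarithmic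
  Sobolev inequality.
* `W₁` (`wasserstein_one_mix_bounds`): testing against `|xᵢ|` and using the product coupling show
  that `W₁(μ, γ) = t a + O(1)`, so `W₁ → ∞` and `W₁² / H = O(t) → 0`.
* `W₂` (`wasserstein_two_mix_sq_le`): the coupling with density `1 + sgn(xᵢ) sgn(yᵢ)` with respect
  to `μ ⊗ γ` has quadratic cost `∫|x|² dμ + ∫|x|² dγ - 2 (∫|xᵢ| dμ) (∫|xᵢ| dγ)`. As
  `∫|x|² dμ = ∫|x|² dγ + t a²` and `∫|xᵢ| dμ ≥ t a`, this leaves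
  `δ_Tal(μ) ≥ 2 c t a - O(1) → ∞` with `c = ∫|xᵢ| dγ > 0`.
-/

open MeasureTheory Filter Real Topology

noncomputable section

/-- Euclidean space `ℝⁿ`. -/
abbrev En (n : ℕ) := EuclideanSpace ℝ (Fin n)

/-- The standard Gaussian measure `dγ = (2π)^{-n/2} e^{-|x|²/2} dx` on `ℝⁿ`. -/
def stdGauss (n : ℕ) : Measure (En n) :=
  (volume : Measure (En n)).withDensity
    (fun x => ENNReal.ofReal ((2 * π) ^ (-(n : ℝ) / 2) * Real.exp (-‖x‖ ^ 2 / 2)))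

/-- The probability measure `dμ = f dγ` with density `f` with respect to the Gaussian. -/
def densMeasure {n : ℕ} (f : En n → ℝ) : Measure (En n) :=
  (stdGauss n).withDensity (fun x => ENNReal.ofReal (f x))

/-- Relative entropy `H(μ) = ∫ f log f dγ` of `dμ = f dγ`. -/
def relEnt {n : ℕ} (f : En n → ℝ) : ℝ :=
  ∫ x, f x * Real.log (f x) ∂(stdGauss n)

/-- Fisher information `I(μ) = ∫ |∇f|²/f dγ` of `dμ = f dγ`. -/
def fisherInfo {n : ℕ} (f : En n → ℝ) : ℝ :=
  ∫ x, ‖gradient f x‖ ^ 2 / f x ∂(stdGauss n)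

/-- Deficit of the logarithmic Sobolev inequality, `δ(μ) = I(μ)/2 − H(μ)`. -/
def lsiDeficit {n : ℕ} (f : En n → ℝ) : ℝ :=
  fisherInfo f / 2 - relEnt f

/-- The `p`-th moment `m_p(μ) = ∫ |x|^p dμ`. -/
def moment {n : ℕ} (p : ℝ) (μ : Measure (En n)) : ℝ := ∫ x, ‖x‖ ^ p ∂μ

/-- A measure is centered if `∫ x dμ = 0`. -/
def IsCentered {n : ℕ} (μ : Measure (En n)) : Prop := (∫ x, x ∂μ) = 0

/-- `π'` is a coupling of `μ` and `ν`. -/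
def IsCoupling {n : ℕ} (π' : Measure (En n × En n)) (μ ν : Measure (En n)) : Prop :=
  IsProbabilityMeasure π' ∧ π'.map Prod.fst = μ ∧ π'.map Prod.snd = ν

/-- Wasserstein distance of order `p`:
`W_p(μ,ν) = inf_π (∫∫ |x−y|^p dπ)^{1/p}` over couplings `π`. -/
def wasserstein {n : ℕ} (p : ℝ) (μ ν : Measure (En n)) : ℝ :=
  ((⨅ (π' : Measure (En n × En n)) (_ : IsCoupling π' μ ν),
      ∫⁻ z, ENNReal.ofReal (‖z.1 - z.2‖ ^ p) ∂π') ^ (1 / p)).toReal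

/-- Deficit of Talagrand's inequality, `δ_Tal(μ) = 2H(μ) − W₂²(μ,γ)` for `dμ = f dγ`. -/
def talDeficit {n : ℕ} (f : En n → ℝ) : ℝ :=
  2 * relEnt f - wasserstein 2 (densMeasure f) (stdGauss n) ^ 2

/-- The `L^p(dμ)` norm of a real function. -/
def LpNorm {n : ℕ} (p : ℝ) (μ : Measure (En n)) (u : En n → ℝ) : ℝ :=
  (∫ x, |u x| ^ p ∂μ) ^ (1 / p)

/-! ### The standard Gaussian: mass, moments, symmetries -/

/-- The Lebesgue density of the standard Gaussian. -/
def gaussDens (n : ℕ) (x : En n) : ℝ :=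
  (2 * π) ^ (-(n : ℝ) / 2) * Real.exp (-‖x‖ ^ 2 / 2)

lemma gaussDens_nonneg {n : ℕ} (x : En n) : 0 ≤ gaussDens n x := by
  unfold gaussDens; positivity

lemma continuous_gaussDens (n : ℕ) : Continuous (gaussDens n) := by
  unfold gaussDens; fun_prop

lemma measurable_gaussDens (n : ℕ) :
    Measurable (fun x : En n => ENNReal.ofReal (gaussDens n x)) :=
  (continuous_gaussDens n).measurable.ennreal_ofReal

lemma stdGauss_eq (n : ℕ) : stdGauss n =
    (volume : Measure (En n)).withDensity (fun x => ENNReal.ofReal (gaussDens n x)) := rfl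

lemma integrable_exp_neg_mul_norm_sq (n : ℕ) {b : ℝ} (hb : 0 < b) :
    Integrable (fun x : En n => Real.exp (-b * ‖x‖ ^ 2)) := by
  refine Integrable.of_integral_ne_zero ?_
  rw [GaussianFourier.integral_rexp_neg_mul_sq_norm hb]
  positivity

lemma integrable_gaussDens (n : ℕ) : Integrable (gaussDens n) := by
  have h := (integrable_exp_neg_mul_norm_sq n (b := 1 / 2) (by norm_num)).const_mul
    ((2 * π) ^ (-(n : ℝ) / 2))
  refine h.congr (ae_of_all _ fun x => ?_)
  simp only [gaussDens]
  congr 2; ring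

lemma integral_gaussDens (n : ℕ) : ∫ x, gaussDens n x = 1 := by
  have h : ∀ x : En n, gaussDens n x =
      (2 * π) ^ (-(n : ℝ) / 2) * Real.exp (-(1 / 2) * ‖x‖ ^ 2) := by
    intro x; simp only [gaussDens]; congr 2; ring
  simp_rw [h]
  rw [integral_const_mul, GaussianFourier.integral_rexp_neg_mul_sq_norm (by norm_num),
    finrank_euclideanSpace_fin, show π / (1 / 2) = 2 * π by ring,
    ← Real.rpow_add (by positivity)]
  simp [neg_div]

instance isProbabilityMeasure_stdGauss (n : ℕ) : IsProbabilityMeasure (stdGauss n) := by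
  constructor
  rw [stdGauss_eq, withDensity_apply _ MeasurableSet.univ, Measure.restrict_univ,
    ← ofReal_integral_eq_lintegral_ofReal (integrable_gaussDens n)
      (ae_of_all _ gaussDens_nonneg), integral_gaussDens, ENNReal.ofReal_one]

lemma integrable_stdGauss_norm_sq (n : ℕ) :
    Integrable (fun x : En n => ‖x‖ ^ 2) (stdGauss n) := by
  rw [stdGauss_eq, integrable_withDensity_iff (measurable_gaussDens n) (by simp)]
  have h := ((integrable_exp_neg_mul_norm_sq n (b := 1 / 4) (by norm_num)).const_mul 4).const_mul
    ((2 * π) ^ (-(n : ℝ) / 2))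
  refine h.mono' ?_ (ae_of_all _ fun x => ?_)
  · exact ((continuous_norm.pow 2).measurable.mul
      (measurable_gaussDens n).ennreal_toReal).aestronglyMeasurable
  · rw [ENNReal.toReal_ofReal (gaussDens_nonneg x), norm_of_nonneg
      (mul_nonneg (by positivity) (gaussDens_nonneg x))]
    have h1 : ‖x‖ ^ 2 / 4 ≤ Real.exp (‖x‖ ^ 2 / 4) := by
      linarith [Real.add_one_le_exp (‖x‖ ^ 2 / 4)]
    have h2 : Real.exp (-(1 / 4) * ‖x‖ ^ 2) =
        Real.exp (‖x‖ ^ 2 / 4) * Real.exp (-‖x‖ ^ 2 / 2) := by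
      rw [← Real.exp_add]; congr 1; ring
    have h3 : ‖x‖ ^ 2 * Real.exp (-‖x‖ ^ 2 / 2) ≤ 4 * Real.exp (-(1 / 4) * ‖x‖ ^ 2) := by
      rw [h2]
      nlinarith [Real.exp_pos (-‖x‖ ^ 2 / 2)]
    calc ‖x‖ ^ 2 * gaussDens n x
        = (2 * π) ^ (-(n : ℝ) / 2) * (‖x‖ ^ 2 * Real.exp (-‖x‖ ^ 2 / 2)) := by
          simp only [gaussDens]; ring
      _ ≤ _ := mul_le_mul_of_nonneg_left h3 (by positivity)

/-- The standard Gaussian is invariant under linear isometries. -/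
lemma map_isometry_stdGauss {n : ℕ} (L : En n ≃ₗᵢ[ℝ] En n) :
    (stdGauss n).map L = stdGauss n := by
  refine Measure.ext_of_lintegral _ fun F hF => ?_
  have hL : Measurable L := L.continuous.measurable
  rw [lintegral_map hF hL, stdGauss_eq,
    lintegral_withDensity_eq_lintegral_mul _ (measurable_gaussDens n)
      (show Measurable (fun x => F (L x)) from hF.comp hL),
    lintegral_withDensity_eq_lintegral_mul _ (measurable_gaussDens n) hF,
    ← L.measurePreserving.lintegral_comp ((measurable_gaussDens n).mul hF)]
  simp [gaussDens, L.norm_map]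

lemma integral_stdGauss_isometry {n : ℕ} (L : En n ≃ₗᵢ[ℝ] En n) {G : Type*}
    [NormedAddCommGroup G] [NormedSpace ℝ G] (F : En n → G) :
    ∫ x, F (L x) ∂(stdGauss n) = ∫ x, F x ∂(stdGauss n) := by
  conv_rhs => rw [← map_isometry_stdGauss L]
  exact (integral_map_equiv L.toHomeomorph.toMeasurableEquiv F).symm

lemma integral_stdGauss_neg {n : ℕ} {G : Type*}
    [NormedAddCommGroup G] [NormedSpace ℝ G] (F : En n → G) :
    ∫ x, F (-x) ∂(stdGauss n) = ∫ x, F x ∂(stdGauss n) :=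
  integral_stdGauss_isometry (LinearIsometryEquiv.neg ℝ) F

lemma integral_stdGauss_odd {n : ℕ} {G : Type*}
    [NormedAddCommGroup G] [NormedSpace ℝ G] (F : En n → G) (hF : ∀ x, F (-x) = -F x) :
    ∫ x, F x ∂(stdGauss n) = 0 := by
  have h := integral_stdGauss_neg F
  simp_rw [hF, integral_neg] at h
  have h2 : (2 : ℝ) • ∫ x, F x ∂(stdGauss n) = 0 := by
    rw [two_smul]
    nth_rewrite 1 [← h]
    exact neg_add_cancel _
  exact (smul_eq_zero.mp h2).resolve_left two_ne_zero

/-- The reflection of `ℝⁿ` changing the sign of the `j`-th coordinate. -/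
def flipCoord {n : ℕ} (j : Fin n) : En n ≃ₗᵢ[ℝ] En n :=
  LinearIsometryEquiv.piLpCongrRight 2
    (fun k => if k = j then LinearIsometryEquiv.neg ℝ else LinearIsometryEquiv.refl ℝ ℝ)

lemma flipCoord_self {n : ℕ} (j : Fin n) (x : En n) : flipCoord j x j = -x j := by
  simp [flipCoord]

lemma flipCoord_of_ne {n : ℕ} {j k : Fin n} (h : k ≠ j) (x : En n) :
    flipCoord j x k = x k := by
  simp [flipCoord, h]

/-! ### Exponential tilts and translations -/

/-- The density `exp(b xᵢ - b²/2)`, with respect to the standard Gaussian, of its translate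
by `b eᵢ`. -/
def tilt {n : ℕ} (i : Fin n) (b : ℝ) (x : En n) : ℝ := Real.exp (b * x i - b ^ 2 / 2)

/-- The vector `b eᵢ`. -/
def shiftVec {n : ℕ} (i : Fin n) (b : ℝ) : En n := EuclideanSpace.single i b

lemma norm_shiftVec {n : ℕ} (i : Fin n) (b : ℝ) : ‖shiftVec i b‖ = |b| := by
  simp [shiftVec]

lemma shiftVec_neg {n : ℕ} (i : Fin n) (b : ℝ) : shiftVec i (-b) = -shiftVec i b := by
  ext j; by_cases h : j = i <;> simp [shiftVec, h]

lemma add_shiftVec_apply {n : ℕ} (i : Fin n) (b : ℝ) (x : En n) :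
    (x + shiftVec i b) i = x i + b := by
  simp [shiftVec]

lemma inner_shiftVec {n : ℕ} (i : Fin n) (b : ℝ) (x : En n) :
    inner ℝ x (shiftVec i b) = b * x i := by
  simp [shiftVec, EuclideanSpace.inner_single_right]

lemma norm_add_shiftVec_sq {n : ℕ} (i : Fin n) (b : ℝ) (x : En n) :
    ‖x + shiftVec i b‖ ^ 2 = ‖x‖ ^ 2 + 2 * (b * x i) + b ^ 2 := by
  rw [norm_add_sq_real, inner_shiftVec, norm_shiftVec, sq_abs]

lemma tilt_pos {n : ℕ} (i : Fin n) (b : ℝ) (x : En n) : 0 < tilt i b x := Real.exp_pos _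

lemma continuous_tilt {n : ℕ} (i : Fin n) (b : ℝ) : Continuous (tilt (n := n) i b) := by
  unfold tilt; fun_prop

lemma measurable_tilt {n : ℕ} (i : Fin n) (b : ℝ) :
    Measurable (fun x : En n => ENNReal.ofReal (tilt i b x)) :=
  (continuous_tilt i b).measurable.ennreal_ofReal

/-- The Cameron–Martin formula: tilting the standard Gaussian amounts to translating it. -/
lemma withDensity_tilt {n : ℕ} (i : Fin n) (b : ℝ) :
    (stdGauss n).withDensity (fun x => ENNReal.ofReal (tilt i b x)) =
      (stdGauss n).map (fun x => x + shiftVec i b) := by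
  refine Measure.ext_of_lintegral _ fun F hF => ?_
  have hs : Measurable (fun x : En n => x + shiftVec i b) := by fun_prop
  rw [lintegral_map hF hs,
    lintegral_withDensity_eq_lintegral_mul _ (measurable_tilt i b) hF, stdGauss_eq,
    lintegral_withDensity_eq_lintegral_mul _ (measurable_gaussDens n)
      ((measurable_tilt i b).mul hF),
    lintegral_withDensity_eq_lintegral_mul _ (measurable_gaussDens n)
      (show Measurable (fun x => F (x + shiftVec i b)) from hF.comp hs),
    ← lintegral_add_right_eq_self _ (shiftVec i b)]
  refine lintegral_congr fun x => ?_
  simp only [Pi.mul_apply]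
  rw [← mul_assoc, ← ENNReal.ofReal_mul (gaussDens_nonneg _)]
  congr 2
  simp only [gaussDens, tilt, norm_add_shiftVec_sq, add_shiftVec_apply]
  rw [mul_assoc, ← Real.exp_add]
  congr 2; ring

lemma integral_map_shift {n : ℕ} (v : En n) {G : Type*} [NormedAddCommGroup G]
    [NormedSpace ℝ G] (F : En n → G) :
    ∫ x, F x ∂((stdGauss n).map (fun x => x + v)) = ∫ x, F (x + v) ∂(stdGauss n) :=
  integral_map_equiv (Homeomorph.addRight v).toMeasurableEquiv F

lemma integrable_map_shift {n : ℕ} (v : En n) {G : Type*} [NormedAddCommGroup G]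
    [NormedSpace ℝ G] (F : En n → G) :
    Integrable F ((stdGauss n).map (fun x => x + v)) ↔
      Integrable (fun x => F (x + v)) (stdGauss n) :=
  integrable_map_equiv (Homeomorph.addRight v).toMeasurableEquiv F

lemma integral_tilt_mul {n : ℕ} (i : Fin n) (b : ℝ) (F : En n → ℝ) :
    ∫ x, tilt i b x * F x ∂(stdGauss n) = ∫ x, F (x + shiftVec i b) ∂(stdGauss n) := by
  rw [← integral_map_shift, ← withDensity_tilt,
    integral_withDensity_eq_integral_toReal_smul (measurable_tilt i b) (by simp)]
  simp [ENNReal.toReal_ofReal (tilt_pos i b _).le]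

lemma integrable_tilt_mul {n : ℕ} (i : Fin n) (b : ℝ) (F : En n → ℝ) :
    Integrable (fun x => tilt i b x * F x) (stdGauss n) ↔
      Integrable (fun x => F (x + shiftVec i b)) (stdGauss n) := by
  rw [← integrable_map_shift, ← withDensity_tilt,
    integrable_withDensity_iff_integrable_smul' (measurable_tilt i b) (by simp)]
  simp [ENNReal.toReal_ofReal (tilt_pos i b _).le]

lemma integrable_tilt {n : ℕ} (i : Fin n) (b : ℝ) : Integrable (tilt i b) (stdGauss n) := by
  simpa using (integrable_tilt_mul i b (fun _ => 1)).2 (integrable_const _)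

lemma integral_tilt {n : ℕ} (i : Fin n) (b : ℝ) : ∫ x, tilt i b x ∂(stdGauss n) = 1 := by
  simpa using integral_tilt_mul i b (fun _ => 1)

lemma integrable_stdGauss_norm (n : ℕ) : Integrable (fun x : En n => ‖x‖) (stdGauss n) := by
  refine ((integrable_stdGauss_norm_sq n).add (integrable_const 1)).mono'
    continuous_norm.aestronglyMeasurable (ae_of_all _ fun x => ?_)
  simp only [norm_norm, Pi.add_apply]
  nlinarith [sq_nonneg (‖x‖ - 1), norm_nonneg x]

lemma abs_coord_le {n : ℕ} (x : En n) (j : Fin n) : |x j| ≤ ‖x‖ :=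
  PiLp.norm_apply_le x j

lemma integrable_stdGauss_coord {n : ℕ} (j : Fin n) :
    Integrable (fun x : En n => x j) (stdGauss n) :=
  (integrable_stdGauss_norm n).mono' (by fun_prop) (ae_of_all _ fun x => abs_coord_le x j)

lemma integral_stdGauss_coord {n : ℕ} (j : Fin n) : ∫ x : En n, x j ∂(stdGauss n) = 0 :=
  integral_stdGauss_odd _ (fun x => by simp)

lemma integrable_tilt_mul_log {n : ℕ} (i : Fin n) (b : ℝ) :
    Integrable (fun x => tilt i b x * Real.log (tilt i b x)) (stdGauss n) := by
  rw [integrable_tilt_mul]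
  simp only [tilt, Real.log_exp, add_shiftVec_apply]
  exact (((integrable_stdGauss_coord i).add (integrable_const b)).const_mul b).sub
    (integrable_const _)

/-- The relative entropy of the Gaussian translated by `b eᵢ` is `b²/2`. -/
lemma integral_tilt_mul_log {n : ℕ} (i : Fin n) (b : ℝ) :
    ∫ x, tilt i b x * Real.log (tilt i b x) ∂(stdGauss n) = b ^ 2 / 2 := by
  rw [integral_tilt_mul]
  simp only [tilt, Real.log_exp, add_shiftVec_apply]
  have h : ∀ x : En n, b * (x i + b) - b ^ 2 / 2 = b * x i + b ^ 2 / 2 := fun x => by ring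
  simp_rw [h]
  rw [integral_add ((integrable_stdGauss_coord i).const_mul b) (integrable_const _),
    integral_const_mul, integral_stdGauss_coord]
  simp

/-! ### The three-component Gaussian mixture -/

/-- The density, with respect to `γ`, of the mixture
`(1 - t) γ + (t/2) γ(· - a eᵢ) + (t/2) γ(· + a eᵢ)`. -/
def mix {n : ℕ} (i : Fin n) (a t : ℝ) (x : En n) : ℝ :=
  (1 - t) + t / 2 * (tilt i a x + tilt i (-a) x)

lemma continuous_mix {n : ℕ} (i : Fin n) (a t : ℝ) : Continuous (mix (n := n) i a t) := by
  have h1 := continuous_tilt (n := n) i a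
  have h2 := continuous_tilt (n := n) i (-a)
  unfold mix; fun_prop

lemma mix_pos {n : ℕ} (i : Fin n) {a t : ℝ} (h0 : 0 < t) (h1 : t < 1) (x : En n) :
    0 < mix i a t x := by
  have := tilt_pos i a x
  have := tilt_pos i (-a) x
  have : 0 < 1 - t := by linarith
  unfold mix; positivity

lemma densMeasure_mix {n : ℕ} (i : Fin n) {a t : ℝ} (h0 : 0 < t) (h1 : t < 1) :
    densMeasure (mix (n := n) i a t) =
      ENNReal.ofReal (1 - t) • stdGauss n +
        ENNReal.ofReal (t / 2) • ((stdGauss n).map (fun x => x + shiftVec i a) +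
          (stdGauss n).map (fun x => x + shiftVec i (-a))) := by
  rw [← withDensity_tilt, ← withDensity_tilt, ← withDensity_add_left (measurable_tilt i a),
    ← withDensity_smul _ ((measurable_tilt i a).add (measurable_tilt i (-a))),
    ← withDensity_const, ← withDensity_add_left measurable_const, densMeasure]
  congr 1
  ext x
  have ha := (tilt_pos i a x).le
  have hb := (tilt_pos i (-a) x).le
  simp only [Pi.add_apply, Pi.smul_apply, smul_eq_mul, mix]
  rw [ENNReal.ofReal_add (by linarith) (by positivity), ENNReal.ofReal_mul (by positivity),
    ENNReal.ofReal_add ha hb]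

lemma isProbabilityMeasure_mix {n : ℕ} (i : Fin n) {a t : ℝ} (h0 : 0 < t) (h1 : t < 1) :
    IsProbabilityMeasure (densMeasure (mix (n := n) i a t)) := by
  constructor
  have hm : ∀ b, ((stdGauss n).map (fun x => x + shiftVec i b)) Set.univ = 1 := fun b => by
    rw [Measure.map_apply (by fun_prop) MeasurableSet.univ]; simp
  rw [densMeasure_mix i h0 h1]
  simp only [Measure.add_apply, Measure.smul_apply, hm, measure_univ, smul_eq_mul]
  rw [mul_one, ← ENNReal.ofReal_one, ← ENNReal.ofReal_add (by norm_num) (by norm_num),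
    ← ENNReal.ofReal_mul (by positivity), ← ENNReal.ofReal_add (by linarith) (by positivity)]
  congr 1; ring

lemma integrable_mix {n : ℕ} (i : Fin n) {a t : ℝ} (h0 : 0 < t) (h1 : t < 1) {G : Type*}
    [NormedAddCommGroup G] [NormedSpace ℝ G] {F : En n → G}
    (hF : ∀ v : En n, Integrable (fun x => F (x + v)) (stdGauss n)) :
    Integrable F (densMeasure (mix i a t)) := by
  rw [densMeasure_mix i h0 h1]
  refine Integrable.add_measure (Integrable.smul_measure ?_ ENNReal.ofReal_ne_top)
    (Integrable.smul_measure (Integrable.add_measure ?_ ?_) ENNReal.ofReal_ne_top)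
  · simpa using hF 0
  · exact (integrable_map_shift _ F).2 (hF _)
  · exact (integrable_map_shift _ F).2 (hF _)

lemma integral_mix {n : ℕ} (i : Fin n) {a t : ℝ} (h0 : 0 < t) (h1 : t < 1) {G : Type*}
    [NormedAddCommGroup G] [NormedSpace ℝ G] {F : En n → G}
    (hF : ∀ v : En n, Integrable (fun x => F (x + v)) (stdGauss n)) :
    ∫ x, F x ∂(densMeasure (mix i a t)) = (1 - t) • ∫ x, F x ∂(stdGauss n) +
      (t / 2) • (∫ x, F (x + shiftVec i a) ∂(stdGauss n) +
        ∫ x, F (x + shiftVec i (-a)) ∂(stdGauss n)) := by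
  have g0 : Integrable F (stdGauss n) := by simpa using hF 0
  have g1 := (integrable_map_shift (shiftVec i a) F).2 (hF _)
  have g2 := (integrable_map_shift (shiftVec i (-a)) F).2 (hF _)
  rw [densMeasure_mix i h0 h1, integral_add_measure (g0.smul_measure ENNReal.ofReal_ne_top)
    ((g1.add_measure g2).smul_measure ENNReal.ofReal_ne_top), integral_smul_measure,
    integral_smul_measure, integral_add_measure g1 g2, integral_map_shift, integral_map_shift,
    ENNReal.toReal_ofReal (by linarith), ENNReal.toReal_ofReal (by positivity)]

/-- The mixture is symmetric under `x ↦ -x`, so odd functions integrate to zero. -/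
lemma integral_mix_odd {n : ℕ} (i : Fin n) {a t : ℝ} (h0 : 0 < t) (h1 : t < 1) {G : Type*}
    [NormedAddCommGroup G] [NormedSpace ℝ G] {F : En n → G}
    (hF : ∀ v : En n, Integrable (fun x => F (x + v)) (stdGauss n))
    (hodd : ∀ x, F (-x) = -F x) :
    ∫ x, F x ∂(densMeasure (mix i a t)) = 0 := by
  have h2 : ∫ x, F (x + shiftVec i (-a)) ∂(stdGauss n) =
      -∫ x, F (x + shiftVec i a) ∂(stdGauss n) := by
    rw [← integral_stdGauss_neg, ← integral_neg]
    congr 1; ext x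
    rw [← hodd, shiftVec_neg]
    congr 1; abel
  rw [integral_mix i h0 h1 hF, integral_stdGauss_odd F hodd, h2]
  simp

lemma integrable_shift_norm_sq {n : ℕ} (v : En n) :
    Integrable (fun x => ‖x + v‖ ^ 2) (stdGauss n) := by
  refine (((integrable_stdGauss_norm_sq n).const_mul 2).add
    (integrable_const (2 * ‖v‖ ^ 2))).mono' (by fun_prop) (ae_of_all _ fun x => ?_)
  rw [norm_of_nonneg (by positivity)]
  simp only [Pi.add_apply]
  nlinarith [norm_add_le x v, norm_nonneg (x + v), sq_nonneg (‖x‖ - ‖v‖), norm_nonneg x,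
    norm_nonneg v]

lemma integrable_shift_norm {n : ℕ} (v : En n) :
    Integrable (fun x => ‖x + v‖) (stdGauss n) := by
  refine ((integrable_stdGauss_norm n).add
    (integrable_const (‖v‖))).mono' (by fun_prop) (ae_of_all _ fun x => ?_)
  rw [norm_norm]
  exact norm_add_le x v

/-- Measurable functions of at most linear growth are integrable against all translates of the
Gaussian. -/
lemma integrable_shift_of_le_norm {n : ℕ} {G : Type*} [NormedAddCommGroup G]
    [NormedSpace ℝ G] [MeasurableSpace G] [BorelSpace G] [SecondCountableTopology G]
    {F : En n → G} (hm : Measurable F) (hF : ∀ x, ‖F x‖ ≤ ‖x‖) (v : En n) :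
    Integrable (fun x => F (x + v)) (stdGauss n) :=
  (integrable_shift_norm v).mono' (hm.comp (by fun_prop)).aestronglyMeasurable
    (ae_of_all _ fun x => hF _)

/-- The second moment of the standard Gaussian. -/
def gaussSecond (n : ℕ) : ℝ := ∫ x : En n, ‖x‖ ^ 2 ∂(stdGauss n)

/-- The first absolute moment of the standard Gaussian. -/
def gaussFirst (n : ℕ) : ℝ := ∫ x : En n, ‖x‖ ∂(stdGauss n)

/-- The first absolute moment of the `i`-th coordinate of the standard Gaussian. -/
def gaussCoord {n : ℕ} (i : Fin n) : ℝ := ∫ x : En n, |x i| ∂(stdGauss n)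

lemma gaussCoord_pos {n : ℕ} (i : Fin n) : 0 < gaussCoord i := by
  have hnn : 0 ≤ gaussCoord i := integral_nonneg fun x => abs_nonneg _
  refine hnn.lt_of_ne' fun h0 => ?_
  have hae := (integral_eq_zero_iff_of_nonneg (fun x : En n => abs_nonneg (x i))
    (integrable_stdGauss_coord i).abs).1 h0
  -- If `xᵢ = 0` almost surely, the translate by `eᵢ`, which is absolutely continuous with
  -- respect to `γ`, would also have vanishing `i`-th coordinate.
  have h1 : ∫ x : En n, tilt i 1 x * x i ∂(stdGauss n) = 0 := by
    refine integral_eq_zero_of_ae ?_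
    filter_upwards [hae] with x hx
    have : x i = 0 := by simpa using hx
    simp [this]
  rw [integral_tilt_mul i 1 (fun x => x i)] at h1
  simp only [add_shiftVec_apply] at h1
  rw [integral_add (integrable_stdGauss_coord i) (integrable_const _),
    integral_stdGauss_coord] at h1
  simp at h1

lemma integral_shift_norm_sq {n : ℕ} (i : Fin n) (b : ℝ) :
    ∫ x : En n, ‖x + shiftVec i b‖ ^ 2 ∂(stdGauss n) = gaussSecond n + b ^ 2 := by
  simp_rw [norm_add_shiftVec_sq]
  have hc := ((integrable_stdGauss_coord i).const_mul b).const_mul 2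
  rw [integral_add (f := fun x : En n => ‖x‖ ^ 2 + 2 * (b * x i))
      ((integrable_stdGauss_norm_sq n).add hc) (integrable_const _),
    integral_add (integrable_stdGauss_norm_sq n) hc, integral_const_mul, integral_const_mul,
    integral_stdGauss_coord]
  simp [gaussSecond]

lemma integral_mix_norm_sq {n : ℕ} (i : Fin n) {a t : ℝ} (h0 : 0 < t) (h1 : t < 1) :
    ∫ x, ‖x‖ ^ 2 ∂(densMeasure (mix (n := n) i a t)) = gaussSecond n + t * a ^ 2 := by
  rw [integral_mix i h0 h1 (F := fun x => ‖x‖ ^ 2) integrable_shift_norm_sq, integral_shift_norm_sq,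
    integral_shift_norm_sq]
  simp only [gaussSecond, smul_eq_mul]
  ring

lemma integral_mix_norm_le {n : ℕ} (i : Fin n) {a t : ℝ} (ha : 0 ≤ a) (h0 : 0 < t)
    (h1 : t < 1) :
    ∫ x, ‖x‖ ∂(densMeasure (mix (n := n) i a t)) ≤ gaussFirst n + t * a := by
  have hb : ∀ b, ∫ x : En n, ‖x + shiftVec i b‖ ∂(stdGauss n) ≤ gaussFirst n + |b| := by
    intro b
    calc ∫ x : En n, ‖x + shiftVec i b‖ ∂(stdGauss n)
        ≤ ∫ x : En n, (‖x‖ + |b|) ∂(stdGauss n) :=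
          integral_mono (integrable_shift_norm _)
            ((integrable_stdGauss_norm n).add (integrable_const _))
            (fun x => (norm_add_le _ _).trans_eq (by rw [norm_shiftVec]))
      _ = _ := by
          rw [integral_add (integrable_stdGauss_norm n) (integrable_const _)]
          simp [gaussFirst]
  rw [integral_mix i h0 h1 (F := fun x => ‖x‖) integrable_shift_norm]
  have e1 := hb a
  have e2 := hb (-a)
  rw [abs_neg] at e2
  rw [abs_of_nonneg ha] at e1 e2
  simp only [smul_eq_mul]
  change (1 - t) * gaussFirst n + _ ≤ _
  nlinarith

lemma le_integral_mix_abs_coord {n : ℕ} (i : Fin n) {a t : ℝ} (h0 : 0 < t)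
    (h1 : t < 1) :
    t * a ≤ ∫ x, |x i| ∂(densMeasure (mix (n := n) i a t)) := by
  have hint : ∀ v : En n, Integrable (fun x => |(x + v) i|) (stdGauss n) :=
    integrable_shift_of_le_norm (F := fun x : En n => |x i|) (by fun_prop)
      (fun x => by simpa using abs_coord_le x i)
  have hb : ∀ b, |b| ≤ ∫ x : En n, |(x + shiftVec i b) i| ∂(stdGauss n) := by
    intro b
    have : ∫ x : En n, (x + shiftVec i b) i ∂(stdGauss n) = b := by
      simp only [add_shiftVec_apply]
      rw [integral_add (integrable_stdGauss_coord i) (integrable_const _),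
        integral_stdGauss_coord]
      simp
    calc |b| = |∫ x : En n, (x + shiftVec i b) i ∂(stdGauss n)| := by rw [this]
      _ ≤ _ := abs_integral_le_integral_abs
  rw [integral_mix i h0 h1 (F := fun x => |x i|) hint]
  have e1 := (le_abs_self a).trans (hb a)
  have e2 := (neg_le_abs (-a)).trans (hb (-a))
  have e0 : 0 ≤ ∫ x : En n, |x i| ∂(stdGauss n) := integral_nonneg fun x => abs_nonneg _
  have e3 := mul_nonneg (sub_nonneg.2 h1.le) e0
  simp only [smul_eq_mul]
  nlinarith

lemma isCentered_mix {n : ℕ} (i : Fin n) {a t : ℝ} (h0 : 0 < t) (h1 : t < 1) :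
    IsCentered (densMeasure (mix (n := n) i a t)) :=
  integral_mix_odd i h0 h1 (F := fun x => x)
    (integrable_shift_of_le_norm (F := fun x => x) measurable_id fun _ => le_rfl) fun _ => rfl

lemma integrable_mix_norm_sq {n : ℕ} (i : Fin n) {a t : ℝ} (h0 : 0 < t) (h1 : t < 1) :
    Integrable (fun x => ‖x‖ ^ 2) (densMeasure (mix (n := n) i a t)) :=
  integrable_mix i h0 h1 (F := fun x => ‖x‖ ^ 2) integrable_shift_norm_sq

/-! ### Entropy of the mixture -/

lemma mul_log_sub_mul_log_ge {x y : ℝ} (hx : 0 < x) (hy : 0 < y) :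
    x - y ≤ x * Real.log x - x * Real.log y := by
  have h := Real.log_le_sub_one_of_pos (div_pos hy hx)
  rw [Real.log_div hy.ne' hx.ne'] at h
  have h2 := mul_le_mul_of_nonneg_left h hx.le
  have h3 : x * (y / x - 1) = y - x := by field_simp
  linarith

/-- Convexity of `u log u`, applied to the three components of the mixture. -/
lemma mix_mul_log_le {n : ℕ} (i : Fin n) {a t : ℝ} (h0 : 0 < t) (h1 : t < 1) (x : En n) :
    mix i a t x * Real.log (mix i a t x) ≤
      t / 2 * (tilt i a x * Real.log (tilt i a x)) +
        t / 2 * (tilt i (-a) x * Real.log (tilt i (-a) x)) := by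
  have hf := mix_pos i (a := a) h0 h1 x
  have e0 := mul_log_sub_mul_log_ge one_pos hf
  have e1 := mul_log_sub_mul_log_ge (tilt_pos i a x) hf
  have e2 := mul_log_sub_mul_log_ge (tilt_pos i (-a) x) hf
  have g0 := mul_le_mul_of_nonneg_left e0 (sub_nonneg.2 h1.le)
  have g1 := mul_le_mul_of_nonneg_left e1 (half_pos h0).le
  have g2 := mul_le_mul_of_nonneg_left e2 (half_pos h0).le
  have hdef : mix i a t x = (1 - t) + t / 2 * (tilt i a x + tilt i (-a) x) := rfl
  rw [Real.log_one] at g0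
  have key : mix i a t x * Real.log (mix i a t x) =
      (1 - t) * Real.log (mix i a t x) + t / 2 * (tilt i a x * Real.log (mix i a t x)) +
        t / 2 * (tilt i (-a) x * Real.log (mix i a t x)) := by
    nth_rewrite 1 [hdef]; ring
  rw [key]
  linarith

/-- Each component is at most the mixture, and `log` is monotone: mixing loses at most the
entropy of the weights. -/
lemma le_mix_mul_log {n : ℕ} (i : Fin n) {a t : ℝ} (h0 : 0 < t) (h1 : t < 1) (x : En n) :
    (1 - t) * Real.log (1 - t) +
      t / 2 * (tilt i a x * Real.log (tilt i a x)) +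
      t / 2 * (tilt i (-a) x * Real.log (tilt i (-a) x)) +
      t / 2 * Real.log (t / 2) * (tilt i a x + tilt i (-a) x) ≤
      mix i a t x * Real.log (mix i a t x) := by
  have ha := tilt_pos i a x
  have hb := tilt_pos i (-a) x
  have hdef : mix i a t x = (1 - t) + t / 2 * (tilt i a x + tilt i (-a) x) := rfl
  have ht : 0 < t / 2 := half_pos h0
  have pa := mul_pos ht ha
  have pb := mul_pos ht hb
  have l0 : Real.log (1 - t) ≤ Real.log (mix i a t x) :=
    Real.log_le_log (by linarith) (by rw [hdef]; nlinarith)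
  have l1 : Real.log (t / 2 * tilt i a x) ≤ Real.log (mix i a t x) :=
    Real.log_le_log pa (by rw [hdef]; nlinarith)
  have l2 : Real.log (t / 2 * tilt i (-a) x) ≤ Real.log (mix i a t x) :=
    Real.log_le_log pb (by rw [hdef]; nlinarith)
  rw [Real.log_mul ht.ne' ha.ne'] at l1
  rw [Real.log_mul ht.ne' hb.ne'] at l2
  have g0 := mul_le_mul_of_nonneg_left l0 (sub_nonneg.2 h1.le)
  have g1 := mul_le_mul_of_nonneg_left l1 pa.le
  have g2 := mul_le_mul_of_nonneg_left l2 pb.le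
  have key : mix i a t x * Real.log (mix i a t x) =
      (1 - t) * Real.log (mix i a t x) + t / 2 * tilt i a x * Real.log (mix i a t x) +
        t / 2 * tilt i (-a) x * Real.log (mix i a t x) := by
    nth_rewrite 1 [hdef]; ring
  rw [key]
  linarith

lemma integrable_of_between {n : ℕ} {F L U : En n → ℝ} (hF : Measurable F)
    (hL : Integrable L (stdGauss n)) (hU : Integrable U (stdGauss n))
    (h1 : ∀ x, L x ≤ F x) (h2 : ∀ x, F x ≤ U x) : Integrable F (stdGauss n) := by
  refine (hL.abs.add hU.abs).mono' hF.aestronglyMeasurable (ae_of_all _ fun x => ?_)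
  simp only [Pi.add_apply, Real.norm_eq_abs]
  refine abs_le.2 ⟨?_, ?_⟩
  · linarith [h1 x, neg_abs_le (L x), abs_nonneg (U x)]
  · linarith [h2 x, le_abs_self (U x), abs_nonneg (L x)]

lemma relEnt_mix_bounds {n : ℕ} (i : Fin n) {a t : ℝ} (h0 : 0 < t) (h1 : t < 1) :
    t * a ^ 2 / 2 + ((1 - t) * Real.log (1 - t) + 2 * (t / 2 * Real.log (t / 2))) ≤
      relEnt (mix (n := n) i a t) ∧ relEnt (mix (n := n) i a t) ≤ t * a ^ 2 / 2 := by
  have ia := (integrable_tilt_mul_log i a (n := n)).const_mul (t / 2)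
  have ib := (integrable_tilt_mul_log i (-a) (n := n)).const_mul (t / 2)
  have iU : Integrable (fun x : En n => t / 2 * (tilt i a x * Real.log (tilt i a x)) +
        t / 2 * (tilt i (-a) x * Real.log (tilt i (-a) x))) (stdGauss n) := ia.add ib
  have iT : Integrable (fun x : En n => t / 2 * Real.log (t / 2) *
      (tilt i a x + tilt i (-a) x)) (stdGauss n) :=
    ((integrable_tilt i a).add (integrable_tilt i (-a))).const_mul _
  have i1 : Integrable (fun x : En n => (1 - t) * Real.log (1 - t) +
      t / 2 * (tilt i a x * Real.log (tilt i a x))) (stdGauss n) := (integrable_const _).add ia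
  have i2 : Integrable (fun x : En n => (1 - t) * Real.log (1 - t) +
      t / 2 * (tilt i a x * Real.log (tilt i a x)) +
      t / 2 * (tilt i (-a) x * Real.log (tilt i (-a) x))) (stdGauss n) := i1.add ib
  have iL : Integrable (fun x : En n => (1 - t) * Real.log (1 - t) +
      t / 2 * (tilt i a x * Real.log (tilt i a x)) +
      t / 2 * (tilt i (-a) x * Real.log (tilt i (-a) x)) +
      t / 2 * Real.log (t / 2) * (tilt i a x + tilt i (-a) x)) (stdGauss n) := i2.add iT
  have hm : Measurable (fun x : En n => mix i a t x * Real.log (mix i a t x)) := by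
    have := (continuous_mix (n := n) i a t).measurable
    fun_prop
  have iF := integrable_of_between hm iL iU (le_mix_mul_log i h0 h1) (mix_mul_log_le i h0 h1)
  constructor
  · have h := integral_mono iL iF (le_mix_mul_log i h0 h1)
    rw [integral_add i2 iT, integral_add i1 ib, integral_add (integrable_const _) ia,
      integral_const_mul, integral_const_mul, integral_const_mul, integral_const_mul,
      integral_add (integrable_tilt i a) (integrable_tilt i (-a)), integral_tilt,
      integral_tilt, integral_tilt_mul_log, integral_tilt_mul_log] at h
    simp only [integral_const, probReal_univ, one_smul, neg_sq] at h
    unfold relEnt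
    linarith
  · have h := integral_mono iF iU (mix_mul_log_le i h0 h1)
    rw [integral_add ia ib, integral_const_mul, integral_const_mul,
      integral_tilt_mul_log, integral_tilt_mul_log, neg_sq] at h
    unfold relEnt
    linarith

/-! ### Fisher information of the mixture -/

lemma norm_gradient_mix_sq {n : ℕ} (i : Fin n) (a t : ℝ) (x : En n) :
    ‖gradient (mix i a t) x‖ ^ 2 = (t / 2 * a * (tilt i a x - tilt i (-a) x)) ^ 2 := by
  have hp : HasFDerivAt (fun x : En n => x i) (EuclideanSpace.proj i : En n →L[ℝ] ℝ) x :=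
    (EuclideanSpace.proj i : En n →L[ℝ] ℝ).hasFDerivAt
  have ht : ∀ b, HasFDerivAt (tilt i b)
      (tilt i b x • b • (EuclideanSpace.proj i : En n →L[ℝ] ℝ)) x := fun b =>
    ((hp.const_mul b).sub_const (b ^ 2 / 2)).exp
  have hm : HasFDerivAt (mix i a t)
      ((t / 2 * a * (tilt i a x - tilt i (-a) x)) •
        (EuclideanSpace.proj i : En n →L[ℝ] ℝ)) x := by
    refine ((((ht a).add (ht (-a))).const_mul (t / 2)).const_add (1 - t)).congr_fderiv ?_
    ext y
    simp
    ring
  have hg : HasGradientAt (mix i a t)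
      (EuclideanSpace.single i (t / 2 * a * (tilt i a x - tilt i (-a) x))) x := by
    rw [hasGradientAt_iff_hasFDerivAt]
    refine hm.congr_fderiv ?_
    ext y
    simp [EuclideanSpace.inner_single_left]
  rw [hg.gradient, PiLp.norm_single, Real.norm_eq_abs, sq_abs]

lemma tilt_mul_tilt_neg {n : ℕ} (i : Fin n) (a : ℝ) (x : En n) :
    tilt i a x * tilt i (-a) x = Real.exp (-a ^ 2) := by
  unfold tilt; rw [← Real.exp_add]; congr 1; ring

lemma tilt_eq_sq {n : ℕ} (i : Fin n) (a : ℝ) (x : En n) :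
    tilt i a x = (Real.exp (-a ^ 2 / 8) * tilt i (a / 2) x) ^ 2 := by
  unfold tilt; rw [← Real.exp_add, ← Real.exp_nat_mul]; congr 1; push_cast; ring

lemma fisher_mix_le {n : ℕ} (i : Fin n) {a t : ℝ} (h0 : 0 < t) (h1 : t < 1) (x : En n) :
    ‖gradient (mix i a t) x‖ ^ 2 / mix i a t x ≤
      a ^ 2 * (t / 2 * (tilt i a x + tilt i (-a) x)) := by
  rw [norm_gradient_mix_sq, div_le_iff₀ (mix_pos i h0 h1 x), mix]
  have ha := tilt_pos i a x
  have hb := tilt_pos i (-a) x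
  set u := tilt i a x
  set v := tilt i (-a) x
  have h2 : 0 ≤ a ^ 2 * (t / 2) * (u + v) * (1 - t) := by
    have : 0 < 1 - t := by linarith
    positivity
  have h3 : 0 ≤ a ^ 2 * (t / 2) ^ 2 * (u * v) := by positivity
  nlinarith

/-- With `p = 1 - t`, `q = t/2` and a component `h²`, the loss `p q h² / f` caused by the other
components is at most `h / 2`. -/
lemma mix_loss {p q h f : ℝ} (hp : 0 ≤ p) (hp1 : p ≤ 1) (hq : 0 ≤ q) (hq1 : q ≤ 1)
    (hh : 0 ≤ h) (hf : p + q * h ^ 2 ≤ f) : p * (q * h ^ 2) ≤ h / 2 * f := by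
  have h1 : p * q ≤ p := by nlinarith
  have h2 : p * q * h ^ 2 ≤ q * h ^ 2 := by
    have := mul_nonneg hq (sq_nonneg h); nlinarith
  have h3 : 2 * (p * q) * h ≤ f := by
    nlinarith [mul_nonneg (mul_nonneg hp hq) (sq_nonneg (h - 1))]
  nlinarith [mul_le_mul_of_nonneg_left h3 hh]

lemma le_fisher_mix {n : ℕ} (i : Fin n) {a t : ℝ} (h0 : 0 < t) (h1 : t ≤ 1 / 2) (x : En n) :
    a ^ 2 * (t / 2 * (tilt i a x + tilt i (-a) x) -
      Real.exp (-a ^ 2 / 8) / 2 * (tilt i (a / 2) x + tilt i (-a / 2) x) -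
        Real.exp (-a ^ 2)) ≤
    ‖gradient (mix i a t) x‖ ^ 2 / mix i a t x := by
  have hf := mix_pos i (a := a) h0 (by linarith) x
  rw [norm_gradient_mix_sq, le_div_iff₀ hf]
  have ha := tilt_pos i a x
  have hb := tilt_pos i (-a) x
  have eu := tilt_eq_sq i a x
  have ev := tilt_eq_sq i (-a) x
  rw [neg_sq] at ev
  have hu0 : 0 < Real.exp (-a ^ 2 / 8) * tilt i (a / 2) x :=
    mul_pos (Real.exp_pos _) (tilt_pos i _ x)
  have hv0 : 0 < Real.exp (-a ^ 2 / 8) * tilt i (-a / 2) x :=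
    mul_pos (Real.exp_pos _) (tilt_pos i _ x)
  rw [← tilt_mul_tilt_neg i a x]
  have hmix : mix i a t x = (1 - t) + t / 2 * (tilt i a x + tilt i (-a) x) := rfl
  set u := tilt i a x
  set v := tilt i (-a) x
  set f := mix i a t x
  set h := Real.exp (-a ^ 2 / 8) * tilt i (a / 2) x with hdef
  set k := Real.exp (-a ^ 2 / 8) * tilt i (-a / 2) x with kdef
  have pu := mul_pos (half_pos h0) ha
  have pv := mul_pos (half_pos h0) hb
  have l1 := mix_loss (p := 1 - t) (q := t / 2) (h := h) (f := f) (by linarith) (by linarith)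
    (by linarith) (by linarith) hu0.le (by rw [← eu, hmix]; linarith)
  have l2 := mix_loss (p := 1 - t) (q := t / 2) (h := k) (f := f) (by linarith) (by linarith)
    (by linarith) (by linarith) hv0.le (by rw [← ev, hmix]; linarith)
  rw [← eu] at l1
  rw [← ev] at l2
  have l3 : t ^ 2 * (u * v) ≤ u * v * f := by
    have : t ^ 2 ≤ f := by rw [hmix]; nlinarith
    nlinarith [mul_pos ha hb]
  have key : (t / 2 * (u + v) -
      Real.exp (-a ^ 2 / 8) / 2 * (tilt i (a / 2) x + tilt i (-a / 2) x) - u * v) * f ≤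
      (t / 2 * (u - v)) ^ 2 := by
    have e1 : Real.exp (-a ^ 2 / 8) / 2 * (tilt i (a / 2) x + tilt i (-a / 2) x) =
        h / 2 + k / 2 := by rw [hdef, kdef]; ring
    have e2 : t / 2 * (u + v) * f =
        (1 - t) * (t / 2 * u) + (1 - t) * (t / 2 * v) + (t / 2 * (u + v)) ^ 2 := by
      rw [hmix]; ring
    rw [e1, sub_mul, sub_mul, e2]
    linarith
  have := mul_le_mul_of_nonneg_left key (sq_nonneg a)
  linarith

lemma fisherInfo_mix_bounds {n : ℕ} (i : Fin n) {a t : ℝ} (h0 : 0 < t) (h1 : t ≤ 1 / 2) :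
    t * a ^ 2 - a ^ 2 * (Real.exp (-a ^ 2 / 8) + Real.exp (-a ^ 2)) ≤
      fisherInfo (mix (n := n) i a t) ∧ fisherInfo (mix (n := n) i a t) ≤ t * a ^ 2 := by
  have iS : ∀ c b b' : ℝ, Integrable (fun x : En n => c * (tilt i b x + tilt i b' x))
      (stdGauss n) := fun c b b' =>
    ((integrable_tilt i b).add (integrable_tilt i b')).const_mul c
  have vS : ∀ c b b' : ℝ, ∫ x : En n, c * (tilt i b x + tilt i b' x) ∂(stdGauss n) = c * 2 := by
    intro c b b'
    rw [integral_const_mul, integral_add (integrable_tilt i b) (integrable_tilt i b'),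
      integral_tilt, integral_tilt]
    norm_num
  have iU := (iS (t / 2) a (-a)).const_mul (a ^ 2)
  have i1 : Integrable (fun x : En n => t / 2 * (tilt i a x + tilt i (-a) x) -
      Real.exp (-a ^ 2 / 8) / 2 * (tilt i (a / 2) x + tilt i (-a / 2) x)) (stdGauss n) :=
    (iS _ _ _).sub (iS _ _ _)
  have iL : Integrable (fun x : En n => a ^ 2 * (t / 2 * (tilt i a x + tilt i (-a) x) -
      Real.exp (-a ^ 2 / 8) / 2 * (tilt i (a / 2) x + tilt i (-a / 2) x) -
        Real.exp (-a ^ 2))) (stdGauss n) :=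
    (i1.sub (integrable_const _)).const_mul _
  have hm : Measurable (fun x : En n => ‖gradient (mix i a t) x‖ ^ 2 / mix i a t x) := by
    simp_rw [norm_gradient_mix_sq]
    have := (continuous_mix (n := n) i a t).measurable
    have := (continuous_tilt (n := n) i a).measurable
    have := (continuous_tilt (n := n) i (-a)).measurable
    fun_prop
  have iF := integrable_of_between hm iL iU (le_fisher_mix i h0 h1)
    (fisher_mix_le i h0 (by linarith))
  constructor
  · have h := integral_mono iL iF (le_fisher_mix i h0 h1)
    rw [integral_const_mul, integral_sub i1 (integrable_const _),
      integral_sub (iS _ _ _) (iS _ _ _), vS, vS] at h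
    simp only [integral_const, probReal_univ, one_smul] at h
    unfold fisherInfo
    linarith
  · have h := integral_mono iF iU (fisher_mix_le i h0 (by linarith))
    rw [integral_const_mul, vS] at h
    unfold fisherInfo
    linarith

/-! ### Bounds on Wasserstein distances -/

/-- The optimal transport cost, as an extended nonnegative real. -/
def transportCost {n : ℕ} (p : ℝ) (μ ν : Measure (En n)) : ENNReal :=
  ⨅ (π' : Measure (En n × En n)) (_ : IsCoupling π' μ ν),
    ∫⁻ z, ENNReal.ofReal (‖z.1 - z.2‖ ^ p) ∂π'

lemma wasserstein_one_eq {n : ℕ} (μ ν : Measure (En n)) :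
    wasserstein 1 μ ν = (transportCost 1 μ ν).toReal := by
  simp [wasserstein, transportCost]

lemma wasserstein_two_sq_eq {n : ℕ} (μ ν : Measure (En n)) :
    wasserstein 2 μ ν ^ 2 = (transportCost 2 μ ν).toReal := by
  change ((transportCost 2 μ ν) ^ (1 / (2 : ℝ))).toReal ^ 2 = _
  rw [← ENNReal.toReal_pow, ← ENNReal.rpow_natCast, ← ENNReal.rpow_mul]
  norm_num

lemma transportCost_one_le {n : ℕ} (μ ν : Measure (En n)) [IsProbabilityMeasure μ]
    [IsProbabilityMeasure ν] (hμ : Integrable (fun x => ‖x‖) μ)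
    (hν : Integrable (fun x => ‖x‖) ν) :
    transportCost 1 μ ν ≤ ENNReal.ofReal (∫ x, ‖x‖ ∂μ + ∫ x, ‖x‖ ∂ν) := by
  have hc : IsCoupling (μ.prod ν) μ ν :=
    ⟨inferInstance, by simp [Measure.map_fst_prod], by simp [Measure.map_snd_prod]⟩
  refine (iInf₂_le (μ.prod ν) hc).trans ?_
  calc ∫⁻ z, ENNReal.ofReal (‖z.1 - z.2‖ ^ (1 : ℝ)) ∂(μ.prod ν)
      ≤ ∫⁻ z, (ENNReal.ofReal ‖z.1‖ + ENNReal.ofReal ‖z.2‖) ∂(μ.prod ν) := by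
        refine lintegral_mono fun z => ?_
        rw [Real.rpow_one, ← ENNReal.ofReal_add (norm_nonneg _) (norm_nonneg _)]
        exact ENNReal.ofReal_le_ofReal (norm_sub_le _ _)
    _ = ∫⁻ z, ENNReal.ofReal ‖z.1‖ ∂(μ.prod ν) + ∫⁻ z, ENNReal.ofReal ‖z.2‖ ∂(μ.prod ν) :=
        lintegral_add_left (by fun_prop) _
    _ = ∫⁻ x, ENNReal.ofReal ‖x‖ ∂μ + ∫⁻ x, ENNReal.ofReal ‖x‖ ∂ν := by
        congr 1
        · rw [← lintegral_map (f := fun x : En n => ENNReal.ofReal ‖x‖) (by fun_prop)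
            measurable_fst, hc.2.1]
        · rw [← lintegral_map (f := fun x : En n => ENNReal.ofReal ‖x‖) (by fun_prop)
            measurable_snd, hc.2.2]
    _ = _ := by
        rw [← ofReal_integral_eq_lintegral_ofReal hμ (ae_of_all _ fun _ => norm_nonneg _),
          ← ofReal_integral_eq_lintegral_ofReal hν (ae_of_all _ fun _ => norm_nonneg _),
          ← ENNReal.ofReal_add (integral_nonneg fun _ => norm_nonneg _)
            (integral_nonneg fun _ => norm_nonneg _)]

lemma wasserstein_one_le {n : ℕ} (μ ν : Measure (En n)) [IsProbabilityMeasure μ]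
    [IsProbabilityMeasure ν] (hμ : Integrable (fun x => ‖x‖) μ)
    (hν : Integrable (fun x => ‖x‖) ν) :
    wasserstein 1 μ ν ≤ ∫ x, ‖x‖ ∂μ + ∫ x, ‖x‖ ∂ν := by
  rw [wasserstein_one_eq]
  exact ENNReal.toReal_le_of_le_ofReal
    (add_nonneg (integral_nonneg fun _ => norm_nonneg _)
      (integral_nonneg fun _ => norm_nonneg _)) (transportCost_one_le μ ν hμ hν)

/-- The easy half of Kantorovich duality, for the `1`-Lipschitz function `|xᵢ|`. -/
lemma le_wasserstein_one {n : ℕ} (i : Fin n) (μ ν : Measure (En n)) [IsProbabilityMeasure μ]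
    [IsProbabilityMeasure ν] (hμ : Integrable (fun x => ‖x‖) μ)
    (hν : Integrable (fun x => ‖x‖) ν) :
    ∫ x, |x i| ∂μ - ∫ x, |x i| ∂ν ≤ wasserstein 1 μ ν := by
  have ib : ∀ {ρ : Measure (En n)}, Integrable (fun x => ‖x‖) ρ →
      Integrable (fun x => |x i|) ρ := fun h =>
    h.mono' (Measurable.aestronglyMeasurable (by fun_prop))
      (ae_of_all _ fun x => by simpa using abs_coord_le x i)
  have hfin : transportCost 1 μ ν ≠ ⊤ :=
    ((transportCost_one_le μ ν hμ hν).trans_lt ENNReal.ofReal_lt_top).ne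
  have hν0 : 0 ≤ ∫ x, |x i| ∂ν := integral_nonneg fun _ => abs_nonneg _
  have key : ENNReal.ofReal (∫ x, |x i| ∂μ) - ENNReal.ofReal (∫ x, |x i| ∂ν) ≤
      transportCost 1 μ ν := by
    refine le_iInf₂ fun π' hc => tsub_le_iff_left.2 ?_
    rw [ofReal_integral_eq_lintegral_ofReal (ib hμ) (ae_of_all _ fun _ => abs_nonneg _),
      ofReal_integral_eq_lintegral_ofReal (ib hν) (ae_of_all _ fun _ => abs_nonneg _)]
    nth_rewrite 1 [← hc.2.1]
    nth_rewrite 1 [← hc.2.2]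
    rw [lintegral_map (by fun_prop) measurable_fst, lintegral_map (by fun_prop) measurable_snd,
      ← lintegral_add_left (by fun_prop)]
    refine lintegral_mono fun z => ?_
    rw [Real.rpow_one, ← ENNReal.ofReal_add (abs_nonneg _) (norm_nonneg _)]
    refine ENNReal.ofReal_le_ofReal ?_
    have h1 := abs_coord_le (z.1 - z.2) i
    rw [PiLp.sub_apply] at h1
    linarith [abs_sub_abs_le_abs_sub (z.1 i) (z.2 i)]
  rw [wasserstein_one_eq]
  rw [← ENNReal.ofReal_sub _ hν0] at key
  exact (ENNReal.ofReal_le_iff_le_toReal hfin).1 key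

lemma measurable_real_sign : Measurable Real.sign := by
  have h : Real.sign = fun r : ℝ => if r < 0 then (-1 : ℝ) else if 0 < r then 1 else 0 := by
    ext r; rfl
  rw [h]
  exact Measurable.ite measurableSet_Iio measurable_const
    (Measurable.ite measurableSet_Ioi measurable_const measurable_const)

lemma abs_real_sign_le (r : ℝ) : |Real.sign r| ≤ 1 := by
  rcases Real.sign_apply_eq r with h | h | h <;> simp [h]

lemma real_sign_mul_self (r : ℝ) : Real.sign r * r = |r| := by
  rcases lt_trichotomy r 0 with h | h | h
  · rw [Real.sign_of_neg h, abs_of_neg h]; ring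
  · simp [h]
  · rw [Real.sign_of_pos h, abs_of_pos h]; ring

lemma sign_coupling_nonneg (r s : ℝ) : 0 ≤ 1 + Real.sign r * Real.sign s := by
  have h : |Real.sign r * Real.sign s| ≤ 1 := by
    rw [abs_mul]
    exact mul_le_one₀ (abs_real_sign_le r) (abs_nonneg _) (abs_real_sign_le s)
  linarith [(abs_le.1 h).1]

/-- The coupling of two symmetric measures that forces the `i`-th coordinates to have the same
sign, and is otherwise as independent as possible. -/
def signCoupling {n : ℕ} (i : Fin n) (μ ν : Measure (En n)) : Measure (En n × En n) :=
  (μ.prod ν).withDensity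
    (fun z => ENNReal.ofReal (1 + Real.sign (z.1 i) * Real.sign (z.2 i)))

lemma measurable_sign_coord {n : ℕ} (i : Fin n) :
    Measurable (fun x : En n => Real.sign (x i)) :=
  measurable_real_sign.comp (by fun_prop)

lemma measurable_sign_prod {n : ℕ} (i : Fin n) : Measurable
    (fun z : En n × En n => 1 + Real.sign (z.1 i) * Real.sign (z.2 i)) :=
  measurable_const.add (((measurable_sign_coord i).comp measurable_fst).mul
    ((measurable_sign_coord i).comp measurable_snd))

lemma integrable_sign_coord {n : ℕ} (i : Fin n) (ν : Measure (En n)) [IsProbabilityMeasure ν] :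
    Integrable (fun x => Real.sign (x i)) ν :=
  (integrable_const (1 : ℝ)).mono' (measurable_sign_coord i).aestronglyMeasurable
    (ae_of_all _ fun _ => abs_real_sign_le _)

lemma lintegral_sign_slice {n : ℕ} (i : Fin n) (ν : Measure (En n)) [IsProbabilityMeasure ν]
    (h : ∫ y, Real.sign (y i) ∂ν = 0) (r : ℝ) :
    ∫⁻ y, ENNReal.ofReal (1 + r.sign * Real.sign (y i)) ∂ν = 1 := by
  have hi := (integrable_sign_coord i ν).const_mul r.sign
  rw [← ofReal_integral_eq_lintegral_ofReal
    (f := fun y : En n => 1 + r.sign * Real.sign (y i)) ((integrable_const _).add hi)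
    (ae_of_all _ fun y => sign_coupling_nonneg _ _),
    integral_add (integrable_const _) hi, integral_const_mul, h]
  simp

lemma isCoupling_signCoupling {n : ℕ} (i : Fin n) (μ ν : Measure (En n))
    [IsProbabilityMeasure μ] [IsProbabilityMeasure ν] (hμ : ∫ y, Real.sign (y i) ∂μ = 0)
    (hν : ∫ y, Real.sign (y i) ∂ν = 0) : IsCoupling (signCoupling i μ ν) μ ν := by
  have hd := (measurable_sign_prod i).ennreal_ofReal
  have m1 : (signCoupling i μ ν).map Prod.fst = μ := by
    refine Measure.ext_of_lintegral _ fun F hF => ?_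
    have hF' : Measurable (fun z : En n × En n => F z.1) := hF.comp measurable_fst
    rw [lintegral_map hF measurable_fst, signCoupling,
      lintegral_withDensity_eq_lintegral_mul _ hd hF',
      lintegral_prod _ (hd.mul hF').aemeasurable]
    refine lintegral_congr fun x => ?_
    simp only [Pi.mul_apply]
    rw [lintegral_mul_const _ (by have := measurable_sign_coord i; fun_prop),
      lintegral_sign_slice i ν hν, one_mul]
  have m2 : (signCoupling i μ ν).map Prod.snd = ν := by
    refine Measure.ext_of_lintegral _ fun F hF => ?_
    have hF' : Measurable (fun z : En n × En n => F z.2) := hF.comp measurable_snd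
    rw [lintegral_map hF measurable_snd, signCoupling,
      lintegral_withDensity_eq_lintegral_mul _ hd hF',
      lintegral_prod_symm' _ (hd.mul hF')]
    refine lintegral_congr fun x => ?_
    simp only [Pi.mul_apply]
    rw [lintegral_mul_const _ (by have := measurable_sign_coord i; fun_prop)]
    simp_rw [mul_comm (Real.sign _) (Real.sign (x.ofLp i))]
    rw [lintegral_sign_slice i μ hμ, one_mul]
  refine ⟨⟨?_⟩, m1, m2⟩
  rw [← Set.preimage_univ (f := Prod.fst), ← Measure.map_apply measurable_fst MeasurableSet.univ,
    m1, measure_univ]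

/-- The quadratic transport cost between symmetric measures, estimated with `signCoupling`: it is
smaller than that of the product coupling by twice the product of the absolute moments of the
`i`-th coordinates. -/
lemma wasserstein_two_sq_le {n : ℕ} (i : Fin n) (μ ν : Measure (En n))
    [IsProbabilityMeasure μ] [IsProbabilityMeasure ν]
    (h2μ : Integrable (fun x => ‖x‖ ^ 2) μ) (h2ν : Integrable (fun x => ‖x‖ ^ 2) ν)
    (hμ : ∫ x, Real.sign (x i) ∂μ = 0) (hν : ∫ x, Real.sign (x i) ∂ν = 0)
    (hμ2 : ∫ x, Real.sign (x i) * ‖x‖ ^ 2 ∂μ = 0)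
    (hν1 : ∀ j, ∫ x, x j ∂ν = 0)
    (hνj : ∀ j, j ≠ i → ∫ x, Real.sign (x i) * x j ∂ν = 0) :
    wasserstein 2 μ ν ^ 2 ≤ ∫ x, ‖x‖ ^ 2 ∂μ + ∫ x, ‖x‖ ^ 2 ∂ν -
      2 * ((∫ x, |x i| ∂μ) * ∫ x, |x i| ∂ν) := by
  have hs := measurable_sign_coord i
  have icoord : ∀ {ρ : Measure (En n)} [IsProbabilityMeasure ρ],
      Integrable (fun x => ‖x‖ ^ 2) ρ → ∀ j, Integrable (fun x => x j) ρ := by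
    intro ρ _ h j
    refine (h.add (integrable_const 1)).mono' (by fun_prop) (ae_of_all _ fun x => ?_)
    have h1 := abs_coord_le x j
    simp only [Pi.add_apply, Real.norm_eq_abs]
    nlinarith [sq_nonneg (‖x‖ - 1)]
  have isign : ∀ {ρ : Measure (En n)} {F : En n → ℝ}, Integrable F ρ →
      Integrable (fun x => Real.sign (x i) * F x) ρ := fun h =>
    h.bdd_mul hs.aestronglyMeasurable (ae_of_all _ fun x => abs_real_sign_le _)
  -- The integrand `‖x - y‖² (1 + sgn xᵢ sgn yᵢ)`, expanded into products of functions of `x`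
  -- and functions of `y`.
  have expand : ∀ z : En n × En n,
      (1 + Real.sign (z.1 i) * Real.sign (z.2 i)) * ‖z.1 - z.2‖ ^ 2 =
      (‖z.1‖ ^ 2 * 1 + 1 * ‖z.2‖ ^ 2 +
        (Real.sign (z.1 i) * ‖z.1‖ ^ 2) * Real.sign (z.2 i) +
        Real.sign (z.1 i) * (Real.sign (z.2 i) * ‖z.2‖ ^ 2)) -
      2 * ∑ j, (z.1 j * z.2 j +
        (Real.sign (z.1 i) * z.1 j) * (Real.sign (z.2 i) * z.2 j)) := by
    intro z
    have hin : inner ℝ z.1 z.2 = ∑ j, z.1 j * z.2 j := by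
      simp [PiLp.inner_apply, mul_comm]
    have hsum : ∑ j, (z.1 j * z.2 j +
        (Real.sign (z.1 i) * z.1 j) * (Real.sign (z.2 i) * z.2 j)) =
        (1 + Real.sign (z.1 i) * Real.sign (z.2 i)) * ∑ j, z.1 j * z.2 j := by
      rw [Finset.mul_sum]
      exact Finset.sum_congr rfl fun j _ => by ring
    rw [hsum, norm_sub_sq_real, hin]
    ring
  have I1 := h2μ.mul_prod (integrable_const (1 : ℝ) (μ := ν))
  have I2 := (integrable_const (1 : ℝ) (μ := μ)).mul_prod h2ν
  have I3 := (isign h2μ).mul_prod (integrable_sign_coord i ν)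
  have I4 := (integrable_sign_coord i μ).mul_prod (isign h2ν)
  have J1 : ∀ j, Integrable (fun z : En n × En n => z.1 j * z.2 j) (μ.prod ν) := fun j =>
    (icoord h2μ j).mul_prod (icoord h2ν j)
  have J2 : ∀ j, Integrable (fun z : En n × En n =>
      (Real.sign (z.1 i) * z.1 j) * (Real.sign (z.2 i) * z.2 j)) (μ.prod ν) := fun j =>
    (isign (icoord h2μ j)).mul_prod (isign (icoord h2ν j))
  have J : ∀ j, Integrable (fun z : En n × En n => z.1 j * z.2 j +
      (Real.sign (z.1 i) * z.1 j) * (Real.sign (z.2 i) * z.2 j)) (μ.prod ν) := fun j =>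
    (J1 j).add (J2 j)
  have I12 : Integrable (fun z : En n × En n => ‖z.1‖ ^ 2 * 1 + 1 * ‖z.2‖ ^ 2) (μ.prod ν) :=
    I1.add I2
  have I123 : Integrable (fun z : En n × En n => ‖z.1‖ ^ 2 * 1 + 1 * ‖z.2‖ ^ 2 +
        (Real.sign (z.1 i) * ‖z.1‖ ^ 2) * Real.sign (z.2 i)) (μ.prod ν) := I12.add I3
  have I1234 : Integrable (fun z : En n × En n => ‖z.1‖ ^ 2 * 1 + 1 * ‖z.2‖ ^ 2 +
        (Real.sign (z.1 i) * ‖z.1‖ ^ 2) * Real.sign (z.2 i) +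
        Real.sign (z.1 i) * (Real.sign (z.2 i) * ‖z.2‖ ^ 2)) (μ.prod ν) := I123.add I4
  have JS : Integrable (fun z : En n × En n => ∑ j, (z.1 j * z.2 j +
      (Real.sign (z.1 i) * z.1 j) * (Real.sign (z.2 i) * z.2 j))) (μ.prod ν) :=
    integrable_finsetSum _ fun j _ => J j
  have Jval : ∀ j, ∫ z : En n × En n, (z.1 j * z.2 j +
      (Real.sign (z.1 i) * z.1 j) * (Real.sign (z.2 i) * z.2 j)) ∂(μ.prod ν) =
      if j = i then (∫ x, |x i| ∂μ) * ∫ x, |x i| ∂ν else 0 := by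
    intro j
    rw [integral_add (J1 j) (J2 j),
      integral_prod_mul (fun x : En n => x j) (fun y : En n => y j), hν1 j,
      integral_prod_mul (fun x : En n => Real.sign (x i) * x j)
        (fun y : En n => Real.sign (y i) * y j)]
    split_ifs with h
    · subst h
      simp_rw [real_sign_mul_self]
      ring
    · rw [hνj j h]; ring
  have hint : Integrable (fun z : En n × En n =>
      (1 + Real.sign (z.1 i) * Real.sign (z.2 i)) * ‖z.1 - z.2‖ ^ 2) (μ.prod ν) := by
    simp_rw [expand]
    exact I1234.sub (JS.const_mul 2)
  have hval : ∫ z : En n × En n,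
      (1 + Real.sign (z.1 i) * Real.sign (z.2 i)) * ‖z.1 - z.2‖ ^ 2 ∂(μ.prod ν) =
      ∫ x, ‖x‖ ^ 2 ∂μ + ∫ x, ‖x‖ ^ 2 ∂ν - 2 * ((∫ x, |x i| ∂μ) * ∫ x, |x i| ∂ν) := by
    simp_rw [expand]
    rw [integral_sub I1234 (JS.const_mul 2), integral_add I123 I4, integral_add I12 I3,
      integral_add I1 I2, integral_const_mul (2 : ℝ), integral_finsetSum _ fun j _ => J j]
    simp_rw [Jval]
    rw [integral_prod_mul (fun x : En n => ‖x‖ ^ 2) (fun _ : En n => (1 : ℝ)),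
      integral_prod_mul (fun _ : En n => (1 : ℝ)) (fun x : En n => ‖x‖ ^ 2),
      integral_prod_mul (fun x : En n => Real.sign (x i) * ‖x‖ ^ 2)
        (fun x : En n => Real.sign (x i)), hμ2,
      integral_prod_mul (fun x : En n => Real.sign (x i))
        (fun x : En n => Real.sign (x i) * ‖x‖ ^ 2), hμ]
    simp
  have hnn : ∀ z : En n × En n,
      0 ≤ (1 + Real.sign (z.1 i) * Real.sign (z.2 i)) * ‖z.1 - z.2‖ ^ 2 := fun z =>
    mul_nonneg (sign_coupling_nonneg _ _) (by positivity)
  rw [wasserstein_two_sq_eq, ← hval]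
  refine ENNReal.toReal_le_of_le_ofReal (integral_nonneg hnn) ?_
  refine (iInf₂_le (signCoupling i μ ν) (isCoupling_signCoupling i μ ν hμ hν)).trans
    (le_of_eq ?_)
  rw [ofReal_integral_eq_lintegral_ofReal hint (ae_of_all _ hnn), signCoupling,
    lintegral_withDensity_eq_lintegral_mul _ (measurable_sign_prod i).ennreal_ofReal
      (by fun_prop)]
  refine lintegral_congr fun z => ?_
  rw [Pi.mul_apply, ENNReal.ofReal_mul (sign_coupling_nonneg _ _), Real.rpow_two]

lemma wasserstein_two_mix_sq_le {n : ℕ} (i : Fin n) {a t : ℝ} (h0 : 0 < t) (h1 : t < 1) :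
    wasserstein 2 (densMeasure (mix (n := n) i a t)) (stdGauss n) ^ 2 ≤
      2 * gaussSecond n + t * a ^ 2 - 2 * (t * a * gaussCoord i) := by
  have := isProbabilityMeasure_mix (n := n) i (a := a) h0 h1
  have hs := measurable_sign_coord i
  have hodd : ∀ x : En n, Real.sign ((-x) i) = -Real.sign (x i) := fun x => by
    rw [PiLp.neg_apply, Real.sign_neg]
  have h := wasserstein_two_sq_le i (densMeasure (mix i a t)) (stdGauss n)
    (integrable_mix_norm_sq i h0 h1) (integrable_stdGauss_norm_sq n)
    (integral_mix_odd i h0 h1 (F := fun x => Real.sign (x i))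
      (fun v => (integrable_const (1 : ℝ)).mono'
        (hs.comp (by fun_prop : Measurable fun x : En n => x + v)).aestronglyMeasurable
        (ae_of_all _ fun _ => abs_real_sign_le _)) hodd)
    (integral_stdGauss_odd _ hodd)
    (integral_mix_odd i h0 h1 (F := fun x => Real.sign (x i) * ‖x‖ ^ 2)
      (fun v => (integrable_shift_norm_sq v).bdd_mul
        (hs.comp (by fun_prop : Measurable fun x : En n => x + v)).aestronglyMeasurable
        (ae_of_all _ fun _ => abs_real_sign_le _))
      (fun x => by rw [hodd, norm_neg, neg_mul]))
    integral_stdGauss_coord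
    (fun j hj => by
      have e := integral_stdGauss_isometry (flipCoord j)
        (fun x : En n => Real.sign (x i) * x j)
      simp_rw [flipCoord_self, flipCoord_of_ne hj.symm, mul_neg, integral_neg] at e
      linarith)
  rw [integral_mix_norm_sq i h0 h1] at h
  have hc := mul_le_mul_of_nonneg_right (le_integral_mix_abs_coord (n := n) i (a := a) h0 h1)
    (gaussCoord_pos i).le
  change _ ≤ _ + gaussSecond n - 2 * (_ * gaussCoord i) at h
  linarith

lemma wasserstein_one_mix_bounds {n : ℕ} (i : Fin n) {a t : ℝ} (ha : 0 ≤ a) (h0 : 0 < t)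
    (h1 : t < 1) :
    t * a - gaussCoord i ≤ wasserstein 1 (densMeasure (mix (n := n) i a t)) (stdGauss n) ∧
      wasserstein 1 (densMeasure (mix (n := n) i a t)) (stdGauss n) ≤
        t * a + 2 * gaussFirst n := by
  have := isProbabilityMeasure_mix (n := n) i (a := a) h0 h1
  have hi : Integrable (fun x => ‖x‖) (densMeasure (mix (n := n) i a t)) :=
    integrable_mix i h0 h1 (F := fun x => ‖x‖) integrable_shift_norm
  constructor
  · have h := le_wasserstein_one i _ (stdGauss n) hi (integrable_stdGauss_norm n)
    change _ - gaussCoord i ≤ _ at h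
    linarith [le_integral_mix_abs_coord (n := n) i (a := a) h0 h1]
  · have h := wasserstein_one_le _ (stdGauss n) hi (integrable_stdGauss_norm n)
    change _ ≤ _ + gaussFirst n at h
    linarith [integral_mix_norm_le (n := n) i ha h0 h1]

/-! ### The sequence -/

/-- Minus the Shannon entropy of the weights `(1 - t, t/2, t/2)`. -/
def weightEnt (t : ℝ) : ℝ :=
  (1 - t) * Real.log (1 - t) + 2 * (t / 2 * Real.log (t / 2))

lemma continuous_weightEnt : Continuous weightEnt := by
  have h := Real.continuous_mul_log
  have h1 : Continuous fun t : ℝ => (1 - t) * Real.log (1 - t) :=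
    h.comp (continuous_const.sub continuous_id)
  have h2 : Continuous fun t : ℝ => t / 2 * Real.log (t / 2) :=
    h.comp (continuous_id.div_const 2)
  exact h1.add (h2.const_mul 2)

lemma tendsto_mul_exp_error :
    Tendsto (fun y : ℝ => y * (Real.exp (-y / 8) + Real.exp (-y))) atTop (𝓝 0) := by
  have h := Real.tendsto_pow_mul_exp_neg_atTop_nhds_zero 1
  have h8 := (h.comp (tendsto_id.atTop_div_const (show (0 : ℝ) < 8 by norm_num))).const_mul 8
  have hs := h8.add h
  simp only [mul_zero, add_zero] at hs
  refine hs.congr fun y => ?_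
  simp only [Function.comp, id, pow_one, neg_div]
  ring

/-- A sequence with vanishing LSI deficit, diverging `W₁` and Talagrand deficit, and
`W₁²/H → 0`. -/
theorem lsi_talagrand_divergence (n : ℕ) (hn : 1 ≤ n) :
    ∃ f : ℕ → En n → ℝ,
      (∀ k x, 0 ≤ f k x) ∧
      (∀ k, IsProbabilityMeasure (densMeasure (f k))) ∧
      (∀ k, IsCentered (densMeasure (f k))) ∧
      (∀ k, Integrable (fun x => ‖x‖ ^ (2 : ℝ)) (densMeasure (f k))) ∧
      Tendsto (fun k => lsiDeficit (f k)) atTop (𝓝 0) ∧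
      Tendsto (fun k => wasserstein 1 (densMeasure (f k)) (stdGauss n)) atTop atTop ∧
      Tendsto (fun k => talDeficit (f k)) atTop atTop ∧
      Tendsto (fun k => wasserstein 1 (densMeasure (f k)) (stdGauss n) ^ 2 / relEnt (f k))
        atTop (𝓝 0) := by
  let i : Fin n := ⟨0, hn⟩
  -- Weight `t = 1/m` and displacement `a = m²`, so that `t a = m` and `t a² = m³`.
  let m : ℕ → ℝ := fun k => (k : ℝ) + 2
  have hm2 : ∀ k, 2 ≤ m k := fun k => by
    have : (0 : ℝ) ≤ k := Nat.cast_nonneg k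
    simp only [m]; linarith
  have hm0 : ∀ k, 0 < m k := fun k => by linarith [hm2 k]
  have hmT : Tendsto m atTop atTop :=
    tendsto_atTop_add_const_right _ _ tendsto_natCast_atTop_atTop
  have ht0 : ∀ k, 0 < (m k)⁻¹ := fun k => inv_pos.2 (hm0 k)
  have hth : ∀ k, (m k)⁻¹ ≤ 1 / 2 := fun k => by
    rw [one_div]; exact inv_anti₀ two_pos (hm2 k)
  have ht1 : ∀ k, (m k)⁻¹ < 1 := fun k => by linarith [hth k]
  have hta : ∀ k, (m k)⁻¹ * m k ^ 2 = m k := fun k => by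
    have := (hm0 k).ne'; field_simp
  have hta2 : ∀ k, (m k)⁻¹ * (m k ^ 2) ^ 2 = m k ^ 3 := fun k => by
    have := (hm0 k).ne'; field_simp
  let f : ℕ → En n → ℝ := fun k => mix i (m k ^ 2) (m k)⁻¹
  have hH : ∀ k, m k ^ 3 / 2 + weightEnt (m k)⁻¹ ≤ relEnt (f k) ∧
      relEnt (f k) ≤ m k ^ 3 / 2 := fun k => by
    have := relEnt_mix_bounds (n := n) i (a := m k ^ 2) (ht0 k) (ht1 k)
    rwa [hta2] at this
  have hI : ∀ k, m k ^ 3 - (m k ^ 2) ^ 2 *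
        (Real.exp (-(m k ^ 2) ^ 2 / 8) + Real.exp (-(m k ^ 2) ^ 2)) ≤ fisherInfo (f k) ∧
      fisherInfo (f k) ≤ m k ^ 3 := fun k => by
    have := fisherInfo_mix_bounds (n := n) i (a := m k ^ 2) (ht0 k) (hth k)
    rwa [hta2] at this
  have hW1 : ∀ k, m k - gaussCoord i ≤ wasserstein 1 (densMeasure (f k)) (stdGauss n) ∧
      wasserstein 1 (densMeasure (f k)) (stdGauss n) ≤ m k + 2 * gaussFirst n := fun k => by
    have := wasserstein_one_mix_bounds (n := n) i (a := m k ^ 2) (by positivity) (ht0 k) (ht1 k)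
    rwa [hta] at this
  have hW2 : ∀ k, wasserstein 2 (densMeasure (f k)) (stdGauss n) ^ 2 ≤
      2 * gaussSecond n + m k ^ 3 - 2 * (m k * gaussCoord i) := fun k => by
    have := wasserstein_two_mix_sq_le (n := n) i (a := m k ^ 2) (ht0 k) (ht1 k)
    rwa [hta, hta2] at this
  have hent : Tendsto (fun k => weightEnt (m k)⁻¹) atTop (𝓝 0) := by
    have h := (continuous_weightEnt.tendsto 0).comp (tendsto_inv_atTop_zero.comp hmT)
    rwa [show weightEnt 0 = 0 by simp [weightEnt]] at h
  have herr : Tendsto (fun k => (m k ^ 2) ^ 2 *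
      (Real.exp (-(m k ^ 2) ^ 2 / 8) + Real.exp (-(m k ^ 2) ^ 2))) atTop (𝓝 0) := by
    have hy : Tendsto (fun k => (m k ^ 2) ^ 2) atTop atTop :=
      (tendsto_pow_atTop two_ne_zero).comp ((tendsto_pow_atTop two_ne_zero).comp hmT)
    exact tendsto_mul_exp_error.comp hy
  refine ⟨f, fun k x => (mix_pos i (ht0 k) (ht1 k) x).le,
    fun k => isProbabilityMeasure_mix i (ht0 k) (ht1 k),
    fun k => isCentered_mix i (ht0 k) (ht1 k), fun k => ?_, ?_, ?_, ?_, ?_⟩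
  · simp_rw [Real.rpow_two]
    exact integrable_mix_norm_sq i (ht0 k) (ht1 k)
  · have hlo := (herr.div_const 2).neg
    have hhi := hent.neg
    rw [zero_div, neg_zero] at hlo
    rw [neg_zero] at hhi
    refine tendsto_of_tendsto_of_tendsto_of_le_of_le hlo hhi (fun k => ?_) (fun k => ?_)
    · simp only [lsiDeficit]; linarith [(hH k).2, (hI k).1]
    · simp only [lsiDeficit]; linarith [(hH k).1, (hI k).2]
  · exact tendsto_atTop_mono (fun k => (hW1 k).1)
      (tendsto_atTop_add_const_right _ (-gaussCoord i) hmT)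
  · have h1 : Tendsto (fun k => (2 * weightEnt (m k)⁻¹ - 2 * gaussSecond n) +
        2 * gaussCoord i * m k) atTop atTop :=
      ((hent.const_mul 2).sub_const _).add_atTop
        (hmT.const_mul_atTop (mul_pos two_pos (gaussCoord_pos i)))
    refine tendsto_atTop_mono (fun k => ?_) h1
    simp only [talDeficit]
    linarith [(hH k).1, hW2 k]
  · have hC : 0 ≤ gaussFirst n := integral_nonneg fun _ => norm_nonneg _
    have hup : Tendsto (fun k => 4 * (1 + 2 * gaussFirst n) ^ 2 * (m k)⁻¹) atTop (𝓝 0) := by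
      simpa using (tendsto_inv_atTop_zero.comp hmT).const_mul (4 * (1 + 2 * gaussFirst n) ^ 2)
    have hev : ∀ᶠ k in atTop, -1 ≤ weightEnt (m k)⁻¹ :=
      (hent.eventually (lt_mem_nhds (show (-1 : ℝ) < 0 by norm_num))).mono fun k hk => hk.le
    have hHlo : ∀ᶠ k in atTop, m k ^ 3 / 4 ≤ relEnt (f k) := hev.mono fun k hk => by
      have h8 : (2 : ℝ) ^ 3 ≤ m k ^ 3 := pow_le_pow_left₀ two_pos.le (hm2 k) 3
      linarith [(hH k).1]
    refine squeeze_zero' (hHlo.mono fun k hk => ?_) (hHlo.mono fun k hk => ?_) hup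
    · exact div_nonneg (sq_nonneg _) (le_trans (by have := hm0 k; positivity) hk)
    · have hm := hm0 k
      have hw : wasserstein 1 (densMeasure (f k)) (stdGauss n) ^ 2 ≤
          ((1 + 2 * gaussFirst n) * m k) ^ 2 := by
        refine pow_le_pow_left₀ ENNReal.toReal_nonneg ((hW1 k).2.trans ?_) 2
        nlinarith [hm2 k]
      calc wasserstein 1 (densMeasure (f k)) (stdGauss n) ^ 2 / relEnt (f k)
          ≤ ((1 + 2 * gaussFirst n) * m k) ^ 2 / (m k ^ 3 / 4) :=
            div_le_div₀ (sq_nonneg _) hw (by positivity) hk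
        _ = 4 * (1 + 2 * gaussFirst n) ^ 2 * (m k)⁻¹ := by field_simp
end
end

section
/- Let dμ = f dγ be a probability measure on ℝⁿ with finite second moment, finite Fisher information I(μ), and H(μ) > 0. Assume that the HWI inequality W_2(μ,γ)·√I(μ) − (1/2)W_2²(μ,γ) ≥ H(μ), the logarithmic Sobolev inequality I(μ) ≥ 2H(μ), and Talagrand's inequality W_2²(μ,γ) ≤ 2H(μ) hold for μ. Then δ(μ) ≥ (1/2)(√I(μ) − W_2(μ,γ))² ≥ (1/2)(√(2H(μ)) − W_2(μ,γ))² ≥ δ_Tal(μ)² / (16·H(μ)). In particular δ_Tal(μ)² ≤ 16·H(μ)·δ(μ). -/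
/-! With `a = √I`, `b = √(2H)` and `w = W₂(μ,γ)`, the logarithmic Sobolev and Talagrand inequalities
say `0 ≤ w ≤ b ≤ a`, and HWI says `H ≤ w a - w² / 2`. Expanding `(a - w)²` gives the first
inequality from HWI, and monotonicity of squaring gives the second. For the third,
`δ_Tal = b² - w² = (b - w)(b + w) ≤ 2 b (b - w)`, whose square is at most `8 H (b - w)²`. -/

open MeasureTheory Filter Real Topology

noncomputable section

/-- The chain of inequalities relating the LSI deficit, the HWI inequality and the
Talagrand deficit: `δ(μ) ≥ (√I − W₂)²/2 ≥ (√(2H) − W₂)²/2 ≥ δ_Tal²/(16H)`. -/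
theorem hwi_deficit_chain (n : ℕ) (f : En n → ℝ) (hf : ∀ x, 0 ≤ f x)
    (hprob : IsProbabilityMeasure (densMeasure f))
    (hm2 : Integrable (fun x => ‖x‖ ^ (2 : ℝ)) (densMeasure f))
    (hI : Integrable (fun x => ‖gradient f x‖ ^ 2 / f x) (stdGauss n))
    (hH : 0 < relEnt f)
    (hHWI : relEnt f ≤ wasserstein 2 (densMeasure f) (stdGauss n) * Real.sqrt (fisherInfo f)
        - wasserstein 2 (densMeasure f) (stdGauss n) ^ 2 / 2)
    (hLSI : 2 * relEnt f ≤ fisherInfo f)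
    (hTal : wasserstein 2 (densMeasure f) (stdGauss n) ^ 2 ≤ 2 * relEnt f) :
    (Real.sqrt (fisherInfo f) - wasserstein 2 (densMeasure f) (stdGauss n)) ^ 2 / 2
        ≤ lsiDeficit f ∧
    (Real.sqrt (2 * relEnt f) - wasserstein 2 (densMeasure f) (stdGauss n)) ^ 2 / 2
        ≤ (Real.sqrt (fisherInfo f) - wasserstein 2 (densMeasure f) (stdGauss n)) ^ 2 / 2 ∧
    talDeficit f ^ 2 / (16 * relEnt f)
        ≤ (Real.sqrt (2 * relEnt f) - wasserstein 2 (densMeasure f) (stdGauss n)) ^ 2 / 2 ∧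
    talDeficit f ^ 2 ≤ 16 * relEnt f * lsiDeficit f := by
  have hI0 : 0 ≤ fisherInfo f := by linarith
  have hw : 0 ≤ wasserstein 2 (densMeasure f) (stdGauss n) := ENNReal.toReal_nonneg
  have ha2 : Real.sqrt (fisherInfo f) ^ 2 = fisherInfo f := Real.sq_sqrt hI0
  have hb2 : Real.sqrt (2 * relEnt f) ^ 2 = 2 * relEnt f := Real.sq_sqrt (by linarith)
  have hba : Real.sqrt (2 * relEnt f) ≤ Real.sqrt (fisherInfo f) := Real.sqrt_le_sqrt hLSI
  have hwb : wasserstein 2 (densMeasure f) (stdGauss n) ≤ Real.sqrt (2 * relEnt f) :=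
    Real.le_sqrt_of_sq_le hTal
  unfold talDeficit lsiDeficit
  generalize wasserstein 2 (densMeasure f) (stdGauss n) = w at *
  generalize Real.sqrt (fisherInfo f) = a at *
  generalize Real.sqrt (2 * relEnt f) = b at *
  have h1 : (a - w) ^ 2 / 2 ≤ fisherInfo f / 2 - relEnt f := by nlinarith
  have h2 : (b - w) ^ 2 / 2 ≤ (a - w) ^ 2 / 2 := by
    have : (b - w) ^ 2 ≤ (a - w) ^ 2 := pow_le_pow_left₀ (by linarith) (by linarith) 2
    linarith
  have h3 : (2 * relEnt f - w ^ 2) ^ 2 ≤ 16 * relEnt f * ((b - w) ^ 2 / 2) := by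
    have hle : b ^ 2 - w ^ 2 ≤ 2 * b * (b - w) := by nlinarith [sq_nonneg (b - w)]
    calc (2 * relEnt f - w ^ 2) ^ 2 = (b ^ 2 - w ^ 2) ^ 2 := by rw [hb2]
      _ ≤ (2 * b * (b - w)) ^ 2 := pow_le_pow_left₀ (by linarith) hle 2
      _ = 4 * b ^ 2 * (b - w) ^ 2 := by ring
      _ = 16 * relEnt f * ((b - w) ^ 2 / 2) := by rw [hb2]; ring
  refine ⟨h1, h2, ?_, h3.trans ?_⟩
  · rw [div_le_iff₀ (by linarith)]
    linarith
  · exact mul_le_mul_of_nonneg_left (h2.trans h1) (by linarith)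
end
end

section
/- Let p > 1. For every real z ≥ 0 one has z·log z ≤ (2/(p−1))·|z − 1|^p + 2·|z − 1|. Consequently, if dμ = f dγ is a probability measure on ℝⁿ with density f ∈ L^p(dγ), then H(μ) ≤ (2/(p−1))·‖f − 1‖_{L^p(dγ)}^p + 2·‖f − 1‖_{L^p(dγ)}. -/
/-! The pointwise inequality: for `z ≤ 1` the left side is nonpositive. For `z = 1 + t` with
`0 ≤ t ≤ 1`, `(1 + t) log (1 + t) ≤ (1 + t) t ≤ 2t`. For `t ≥ 1`, `1 + t ≤ 2t` reduces the claim to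
`log (1 + t) ≤ t ^ (p - 1) / (p - 1) + 1`, which follows from `log (1 + t) ≤ log 2 + log t` and
`(p - 1) log t ≤ t ^ (p - 1)`.

The entropy bound is obtained by integrating the pointwise inequality against the Gaussian, a
probability measure, and bounding the `L¹` norm of `f - 1` by its `L^p` norm (Jensen). Measurability
of `f` is never needed: `|f - 1|` is measurable as a power of `|f - 1| ^ p`, and if `f log f` is not
integrable then its Bochner integral is `0`, below the nonnegative right side. -/

open MeasureTheory Filter Real Topology

noncomputable section

/-- The Gaussian normalisation: the density `(2π)^{-n/2} e^{-|x|²/2}` has total mass one. -/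
lemma isProbabilityMeasure_stdGauss_s17 (n : ℕ) : IsProbabilityMeasure (stdGauss n) := by
  have hI : ∫ x : En n, Real.exp (-(1 / 2 : ℝ) * ‖x‖ ^ 2) = (π / (1 / 2)) ^ ((n : ℝ) / 2) := by
    have h := GaussianFourier.integral_rexp_neg_mul_sq_norm (V := En n) (b := 1 / 2) (by norm_num)
    simpa using h
  have h2 : (0 : ℝ) < 2 * π := by positivity
  have hint : Integrable (fun x : En n => Real.exp (-(1 / 2 : ℝ) * ‖x‖ ^ 2)) := by
    -- A nonzero Bochner integral forces integrability.
    by_contra h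
    rw [integral_undef h] at hI
    have : (0 : ℝ) < (π / (1 / 2)) ^ ((n : ℝ) / 2) := by positivity
    linarith
  have heq : (fun x : En n => (2 * π) ^ (-(n : ℝ) / 2) * Real.exp (-‖x‖ ^ 2 / 2)) =
      fun x : En n => (2 * π) ^ (-(n : ℝ) / 2) * Real.exp (-(1 / 2 : ℝ) * ‖x‖ ^ 2) := by
    funext x
    congr 2
    ring
  refine ⟨?_⟩
  rw [stdGauss, withDensity_apply _ MeasurableSet.univ, Measure.restrict_univ,
    ← ofReal_integral_eq_lintegral_ofReal]
  · rw [heq, integral_const_mul, hI, show π / (1 / 2) = 2 * π by ring, ← Real.rpow_add h2]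
    simp [neg_div]
  · rw [heq]
    exact hint.const_mul _
  · exact ae_of_all _ fun x => by positivity

lemma mul_log_le_rpow (p : ℝ) (hp : 1 < p) (z : ℝ) (hz : 0 ≤ z) :
    z * Real.log z ≤ 2 / (p - 1) * |z - 1| ^ p + 2 * |z - 1| := by
  have hq : 0 < p - 1 := by linarith
  have hA : 0 ≤ 2 / (p - 1) * |z - 1| ^ p := by positivity
  rcases le_total z 1 with h1 | h1
  · have : z * Real.log z ≤ 0 := mul_nonpos_of_nonneg_of_nonpos hz (Real.log_nonpos hz h1)
    have := abs_nonneg (z - 1)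
    linarith
  have habs : |z - 1| = z - 1 := abs_of_nonneg (by linarith)
  have hz0 : 0 < z := by linarith
  rcases le_total z 2 with h2 | h2
  · have hl := Real.log_le_sub_one_of_pos hz0
    rw [habs] at hA ⊢
    nlinarith
  rw [habs]
  set t := z - 1 with ht
  have ht1 : 1 ≤ t := by linarith
  have ht0 : 0 < t := by linarith
  have hlog : Real.log z ≤ 1 + Real.log t := by
    have h3 : Real.log z ≤ Real.log (2 * t) := Real.log_le_log hz0 (by linarith)
    rw [Real.log_mul (by norm_num) ht0.ne'] at h3
    have := Real.log_le_sub_one_of_pos (show (0 : ℝ) < 2 by norm_num)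
    linarith
  have hpow : Real.log t ≤ t ^ (p - 1) / (p - 1) := Real.log_le_rpow_div ht0.le hq
  have hlog0 : 0 ≤ Real.log z := Real.log_nonneg h1
  calc z * Real.log z ≤ (2 * t) * Real.log z := by gcongr; linarith
    _ ≤ (2 * t) * (1 + t ^ (p - 1) / (p - 1)) := by gcongr; linarith
    _ = 2 / (p - 1) * (t ^ (p - 1) * t) + 2 * t := by ring
    _ = 2 / (p - 1) * t ^ p + 2 * t := by
      rw [← Real.rpow_add_one ht0.ne', sub_add_cancel]

/-- The elementary inequality `z log z ≤ (2/(p−1))|z−1|^p + 2|z−1|` and the resulting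
entropy bound `H(μ) ≤ (2/(p−1))‖f−1‖_{L^p(dγ)}^p + 2‖f−1‖_{L^p(dγ)}`. -/
theorem entropy_Lp_bound (p : ℝ) (hp : 1 < p) :
    (∀ z : ℝ, 0 ≤ z → z * Real.log z ≤ 2 / (p - 1) * |z - 1| ^ p + 2 * |z - 1|) ∧
    (∀ (n : ℕ) (f : En n → ℝ), (∀ x, 0 ≤ f x) →
      IsProbabilityMeasure (densMeasure f) →
      Integrable (fun x => |f x - 1| ^ p) (stdGauss n) →
      relEnt f ≤ 2 / (p - 1) * LpNorm p (stdGauss n) (fun x => f x - 1) ^ p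
        + 2 * LpNorm p (stdGauss n) (fun x => f x - 1)) := by
  refine ⟨mul_log_le_rpow p hp, fun n f hf _ hint => ?_⟩
  have := isProbabilityMeasure_stdGauss_s17 n
  have hq : 0 < p - 1 := by linarith
  have hp0 : 0 < p := by linarith
  have hI0 : 0 ≤ ∫ x, |f x - 1| ^ p ∂(stdGauss n) := integral_nonneg fun x => by positivity
  have hN0 : 0 ≤ LpNorm p (stdGauss n) (fun x => f x - 1) := Real.rpow_nonneg hI0 _
  have hNp : LpNorm p (stdGauss n) (fun x => f x - 1) ^ p
      = ∫ x, |f x - 1| ^ p ∂(stdGauss n) := by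
    rw [LpNorm, ← Real.rpow_mul hI0, one_div_mul_cancel hp0.ne', Real.rpow_one]
  by_cases hent : Integrable (fun x => f x * Real.log (f x)) (stdGauss n)
  swap
  · rw [relEnt, integral_undef hent]
    positivity
  have hmeas : AEStronglyMeasurable (fun x => |f x - 1|) (stdGauss n) := by
    have h := (hint.aemeasurable.pow_const (1 / p)).aestronglyMeasurable
    refine h.congr (ae_of_all _ fun x => ?_)
    show (|f x - 1| ^ p) ^ (1 / p) = |f x - 1|
    rw [← Real.rpow_mul (abs_nonneg _), mul_one_div_cancel hp0.ne', Real.rpow_one]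
  have hint1 : Integrable (fun x => |f x - 1|) (stdGauss n) := by
    refine ((integrable_const (1 : ℝ)).add hint).mono' hmeas (ae_of_all _ fun x => ?_)
    rw [Real.norm_eq_abs, abs_abs, Pi.add_apply]
    have h0 : 0 ≤ |f x - 1| ^ p := by positivity
    rcases le_total |f x - 1| 1 with h | h
    · linarith
    · have := Real.self_le_rpow_of_one_le h hp.le
      linarith
  have hjensen : ∫ x, |f x - 1| ∂(stdGauss n) ≤ LpNorm p (stdGauss n) (fun x => f x - 1) := by
    have h := (convexOn_rpow hp.le).map_integral_le
      (Real.continuous_rpow_const hp0.le).continuousOn isClosed_Ici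
      (ae_of_all (stdGauss n) fun x => abs_nonneg (f x - 1)) hint1 hint
    rw [← hNp] at h
    exact (Real.rpow_le_rpow_iff (integral_nonneg fun x => abs_nonneg _) hN0 hp0).1 h
  calc relEnt f
      ≤ ∫ x, (2 / (p - 1) * |f x - 1| ^ p + 2 * |f x - 1|) ∂(stdGauss n) :=
        integral_mono hent ((hint.const_mul _).add (hint1.const_mul _))
          fun x => mul_log_le_rpow p hp (f x) (hf x)
    _ = 2 / (p - 1) * ∫ x, |f x - 1| ^ p ∂(stdGauss n)
          + 2 * ∫ x, |f x - 1| ∂(stdGauss n) := by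
        rw [integral_add (hint.const_mul _) (hint1.const_mul _), integral_const_mul,
          integral_const_mul]
    _ ≤ _ := by
        rw [hNp]
        gcongr
end
end
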